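/- arXiv:2404.00831 — 5 statements merged into one kernel-verified Lean document; each statement's English description precedes it below -/
import Mathlib

section
/- For all integers m ≥ 2 and 1 ≤ r ≤ m, and every integer z with z ≥ (r^r / r!) · r · ln(m) + 1, there exist functions B⁽¹⁾, …, B⁽ᶻ⁾ : [m] → [r] (partitions of the m items into r chunks) such that for every subset S ⊆ [m] with |S| ≤ r there is some ℓ ∈ [z] for which B⁽ℓ⁾ is injective on S; that is, the list of partitions B⁽¹⁾, …, B⁽ᶻ⁾ is r-itemizing. -/
open Classical in
lemma good_card (m r : ℕ) (S : Finset (Fin m)) (hS : S.card = r) :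
    Nat.factorial r * r ^ (m - r) ≤
      (Finset.univ.filter (fun B : Fin m → Fin r => Set.InjOn B ↑S)).card := by
  let f : (({x // x ∈ S} ↪ Fin r) × ({x // ¬ x ∈ S} → Fin r)) → (Fin m → Fin r) :=
    fun q => (Equiv.piEquivPiSubtypeProd (fun x => x ∈ S) (fun _ => Fin r)).symm (⇑q.1, q.2)
  have hf : Function.Injective f := by
    rintro ⟨a, b⟩ ⟨a', b'⟩ h
    have h2 := (Equiv.piEquivPiSubtypeProd (fun x => x ∈ S) (fun _ => Fin r)).symm.injective h
    simp only [Prod.mk.injEq] at h2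
    ext1
    · exact DFunLike.coe_injective h2.1
    · exact h2.2
  have hc : Fintype.card (({x // x ∈ S} ↪ Fin r) × ({x // ¬ x ∈ S} → Fin r))
      = Nat.factorial r * r ^ (m - r) := by
    rw [Fintype.card_prod, Fintype.card_embedding_eq, Fintype.card_fun,
      Fintype.card_subtype_compl]
    simp [hS, Nat.descFactorial_self]
  rw [← hc, ← Finset.card_univ]
  refine Finset.card_le_card_of_injOn f ?_ hf.injOn
  rintro ⟨a, b⟩ -
  simp only [Finset.coe_filter, Finset.mem_univ, true_and, Set.mem_setOf_eq]
  intro x hx y hy hxy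
  have hx' : x ∈ S := hx
  have hy' : y ∈ S := hy
  simp only [f, Equiv.piEquivPiSubtypeProd_symm_apply, hx', hy', dif_pos] at hxy
  simpa using a.injective hxy

/-- existence of an `r`-itemizing list of `z` partitions of `[m]` into `r` chunks,
whenever `z ≥ (r^r / r!) · r · ln(m) + 1`. A partition `B : Fin m → Fin r` itemizes
`S` if it is injective on `S`. -/
theorem exists_itemizing_partitions
    (m r z : ℕ) (hm : 2 ≤ m) (hr1 : 1 ≤ r) (hrm : r ≤ m)
    (hz : ((r : ℝ) ^ r / (Nat.factorial r : ℝ)) * r * Real.log m + 1 ≤ (z : ℝ)) :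
    ∃ B : Fin z → (Fin m → Fin r),
      ∀ S : Finset (Fin m), S.card ≤ r → ∃ ℓ : Fin z, Set.InjOn (B ℓ) ↑S := by
  classical
  suffices h : ∃ B : Fin z → (Fin m → Fin r),
      ∀ S : Finset (Fin m), S.card = r → ∃ ℓ : Fin z, Set.InjOn (B ℓ) ↑S by
    obtain ⟨B, hB⟩ := h
    refine ⟨B, fun S hS => ?_⟩
    obtain ⟨T, hST, hT⟩ := Finset.exists_superset_card_eq hS (by simpa using hrm)
    obtain ⟨l, hl⟩ := hB T hT
    exact ⟨l, hl.mono (by exact_mod_cast hST)⟩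
  by_contra! hcon
  let bad : Finset (Fin m) → Finset (Fin m → Fin r) :=
    fun S => Finset.univ.filter (fun B => ¬ Set.InjOn B ↑S)
  have hcov : (Finset.univ : Finset (Fin z → (Fin m → Fin r))) ⊆
      (Finset.powersetCard r Finset.univ).biUnion
        (fun S => Fintype.piFinset (fun _ : Fin z => bad S)) := by
    intro B _
    obtain ⟨S, hS, h⟩ := hcon B
    simp only [Finset.mem_biUnion, Finset.mem_powersetCard, Fintype.mem_piFinset]
    exact ⟨S, ⟨Finset.subset_univ _, hS⟩, fun l => by simpa [bad] using h l⟩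
  have hr0 : (0 : ℝ) < r := by exact_mod_cast hr1
  have hm0 : (0 : ℝ) < m := by exact_mod_cast (by omega : 0 < m)
  have hfac : (0 : ℝ) < (Nat.factorial r : ℝ) := by exact_mod_cast Nat.factorial_pos r
  set p : ℝ := (Nat.factorial r : ℝ) / (r : ℝ) ^ r with hp
  have hp0 : 0 < p := by positivity
  have hbad : ∀ S ∈ Finset.powersetCard r (Finset.univ : Finset (Fin m)),
      ((Fintype.piFinset (fun _ : Fin z => bad S)).card : ℝ)
        ≤ ((r : ℝ) ^ m) ^ z * Real.exp (-(p * z)) := by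
    intro S hS
    have hS' := (Finset.mem_powersetCard.1 hS).2
    have hg := good_card m r S hS'
    have hsum := Finset.card_filter_add_card_filter_not
      (s := (Finset.univ : Finset (Fin m → Fin r))) (fun B => Set.InjOn B ↑S)
    have hN : (Finset.univ : Finset (Fin m → Fin r)).card = r ^ m := by simp
    rw [hN] at hsum
    have h1 : ((bad S).card : ℝ) + (Nat.factorial r : ℝ) * (r : ℝ) ^ (m - r) ≤ (r : ℝ) ^ m := by
      have : (bad S).card + Nat.factorial r * r ^ (m - r) ≤ r ^ m := by
        simp only [bad]; omega
      exact_mod_cast this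
    have h2 : (Nat.factorial r : ℝ) * (r : ℝ) ^ (m - r) = (r : ℝ) ^ m * p := by
      have : (r : ℝ) ^ m = (r : ℝ) ^ r * (r : ℝ) ^ (m - r) := by
        rw [← pow_add]; congr 1; omega
      rw [this, hp]; field_simp
    have h3 : ((bad S).card : ℝ) ≤ (r : ℝ) ^ m * Real.exp (-p) := by
      have := Real.add_one_le_exp (-p)
      have h4 : (0 : ℝ) < (r : ℝ) ^ m := by positivity
      nlinarith
    rw [Fintype.card_piFinset]
    simp only [Finset.prod_const, Finset.card_univ, Fintype.card_fin, Nat.cast_pow]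
    calc ((bad S).card : ℝ) ^ z ≤ ((r : ℝ) ^ m * Real.exp (-p)) ^ z := by gcongr
      _ = _ := by
        rw [mul_pow, ← Real.exp_nat_mul]; congr 2; ring
  have hle : ((r : ℝ) ^ m) ^ z ≤ (m : ℝ) ^ r * (((r : ℝ) ^ m) ^ z * Real.exp (-(p * z))) := by
    have h1 := (Finset.card_le_card hcov).trans Finset.card_biUnion_le
    have h2 : (Finset.univ : Finset (Fin z → (Fin m → Fin r))).card = (r ^ m) ^ z := by simp
    rw [h2] at h1
    have h3 : ((r : ℝ) ^ m) ^ z ≤ ∑ S ∈ Finset.powersetCard r (Finset.univ : Finset (Fin m)),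
        ((Fintype.piFinset (fun _ : Fin z => bad S)).card : ℝ) := by exact_mod_cast h1
    refine h3.trans ((Finset.sum_le_card_nsmul _ _ _ hbad).trans ?_)
    rw [nsmul_eq_mul, Finset.card_powersetCard]
    have h4 : ((Finset.univ : Finset (Fin m)).card.choose r : ℝ) ≤ (m : ℝ) ^ r := by
      rw [Finset.card_univ, Fintype.card_fin]
      exact_mod_cast Nat.choose_le_pow m r
    gcongr
  have hpos : (0 : ℝ) < ((r : ℝ) ^ m) ^ z := by positivity
  have hlt : (m : ℝ) ^ r * Real.exp (-(p * z)) < 1 := by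
    have h1 : (m : ℝ) ^ r = Real.exp (r * Real.log m) := by
      rw [Real.exp_nat_mul, Real.exp_log hm0]
    rw [h1, ← Real.exp_add, Real.exp_lt_one_iff]
    have h2 := mul_le_mul_of_nonneg_left hz hp0.le
    have h3 : p * (((r : ℝ) ^ r / (Nat.factorial r : ℝ)) * r * Real.log m + 1)
        = r * Real.log m + p := by
      rw [hp]; field_simp
    linarith
  nlinarith
end

section
/- There exist universal constants c, C > 0 such that for all integers m ≥ 2, n ≥ 1, and k with C · log₂(m) ≤ k ≤ m, there is a set 𝒜 of allocations of the m items to the n bidders with the following two properties: (1) the family {Aᵢ : A ∈ 𝒜, i ∈ [n]} of all sets that any bidder can possibly receive in 𝒜 has cardinality at most 2^{c·k}; and (2) for every profile of monotone subadditive valuations v₁,…,vₙ : 2^[m] → ℝ≥0, max_{A ∈ 𝒜} Σᵢ vᵢ(Aᵢ) ≥ √(k/m) · max over all allocations A of Σᵢ vᵢ(Aᵢ). -/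
namespace SubaddMech
open Finset

/-- counting step for injective colourings -/
lemma inj_count {m q K : ℕ} (hq : 2 * K ≤ q) (D : Finset (Fin m)) (hD : D.card ≤ K) :
    q ^ m ≤ 2 ^ D.card *
      (univ.filter (fun h : Fin m → Fin q => Set.InjOn h (D : Set (Fin m)))).card := by
  classical
  induction D using Finset.induction_on with
  | empty => simp
  | insert a D ha ih =>
    rw [card_insert_of_notMem ha] at hD ⊢
    have ih := ih (by omega)
    set G := univ.filter (fun h : Fin m → Fin q => Set.InjOn h (D : Set (Fin m))) with hG
    set G' := univ.filter
      (fun h : Fin m → Fin q => Set.InjOn h ((insert a D : Finset (Fin m)) : Set (Fin m))) with hG'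
    have key : G.card * (q - D.card) ≤ G'.card * q := by
      have h1 : G.card * (q - D.card) ≤ (G.sigma (fun h => (D.image h)ᶜ)).card := by
        rw [card_sigma, ← smul_eq_mul]
        apply card_nsmul_le_sum
        intro h _
        rw [card_compl, Fintype.card_fin]
        have := card_image_le (s := D) (f := h)
        omega
      have h2 : (G.sigma (fun h => (D.image h)ᶜ)).card ≤ (G' ×ˢ (univ : Finset (Fin q))).card := by
        apply card_le_card_of_injOn (fun p => (Function.update p.1 a p.2, p.1 a))
        · rintro ⟨h, c⟩ hp
          simp only [coe_sigma, Set.mem_sigma_iff, mem_coe, hG, mem_filter, mem_univ, true_and,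
            mem_compl, mem_image, not_exists, not_and] at hp
          obtain ⟨hi, hc⟩ := hp
          simp only [mem_coe, mem_product, mem_univ, and_true, hG', mem_filter, true_and]
          have hne : ∀ x ∈ D, x ≠ a := fun x hx e => ha (e ▸ hx)
          intro x hx y hy hxy
          simp only [coe_insert, Set.mem_insert_iff, mem_coe] at hx hy
          rcases hx with rfl | hx <;> rcases hy with rfl | hy
          · rfl
          · simp [Function.update_of_ne (hne y hy)] at hxy
            exact absurd hxy.symm (hc y hy)
          · simp [Function.update_of_ne (hne x hx)] at hxy
            exact absurd hxy (hc x hx)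
          · rw [Function.update_of_ne (hne x hx), Function.update_of_ne (hne y hy)] at hxy
            exact hi hx hy hxy
        · rintro ⟨h, c⟩ _ ⟨h', c'⟩ _ he
          simp only [Prod.mk.injEq] at he
          obtain ⟨e1, e2⟩ := he
          have e3 : c = c' := by
            have := congrFun e1 a
            simpa using this
          have e4 : h = h' := by
            funext x
            by_cases hx : x = a
            · rw [hx]; exact e2
            · have := congrFun e1 x
              simpa [Function.update_of_ne hx] using this
          subst e3; subst e4; rfl
      rw [card_product, card_univ, Fintype.card_fin] at h2
      exact h1.trans h2
    have hq0 : 0 < q := by omega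
    have h3 : G.card * q ≤ 2 * (G'.card * q) := by
      calc G.card * q ≤ G.card * (2 * (q - D.card)) := Nat.mul_le_mul_left _ (by omega)
        _ = 2 * (G.card * (q - D.card)) := by ring
        _ ≤ _ := Nat.mul_le_mul_left _ key
    have h4 : G.card ≤ 2 * G'.card := by
      apply Nat.le_of_mul_le_mul_right _ hq0
      linarith
    calc q ^ m ≤ 2 ^ D.card * G.card := ih
      _ ≤ 2 ^ D.card * (2 * G'.card) := Nat.mul_le_mul_left _ h4
      _ = _ := by ring

/-- greedy covering -/
lemma cover {Ω X : Type*} [Fintype Ω] [DecidableEq Ω] [DecidableEq X] [Nonempty Ω]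
    (R : Ω → X → Prop) [∀ h x, Decidable (R h x)] (𝒟 : Finset X) (A : ℝ) (hA : 1 ≤ A)
    (hR : ∀ x ∈ 𝒟, (Fintype.card Ω : ℝ) ≤ A * ((univ.filter (fun h => R h x)).card : ℝ)) (t : ℕ) :
    ∃ H : Finset Ω, H.card ≤ t ∧
      ((𝒟.filter (fun x => ∀ h ∈ H, ¬ R h x)).card : ℝ) ≤ 𝒟.card * (1 - 1 / A) ^ t := by
  induction t with
  | zero => exact ⟨∅, by simp, by simp⟩
  | succ t ih =>
    obtain ⟨H, hH, hc⟩ := ih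
    set U := 𝒟.filter (fun x => ∀ h ∈ H, ¬ R h x) with hU
    have hA0 : 0 < A := by linarith
    have : ∃ h : Ω, (U.card : ℝ) / A ≤ ((U.filter (fun x => R h x)).card : ℝ) := by
      by_contra! hcon
      have h1 : ∑ h : Ω, ((U.filter (fun x => R h x)).card : ℝ) < ∑ h : Ω, (U.card : ℝ) / A :=
        sum_lt_sum_of_nonempty univ_nonempty (fun h _ => hcon h)
      have h2 : ∑ h : Ω, ((U.filter (fun x => R h x)).card : ℝ)
          = ∑ x ∈ U, ((univ.filter (fun h => R h x)).card : ℝ) := by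
        simp only [card_filter, Nat.cast_sum]
        rw [sum_comm]
      have h3 : ∑ x ∈ U, ((Fintype.card Ω : ℝ) / A) ≤
          ∑ x ∈ U, ((univ.filter (fun h => R h x)).card : ℝ) := by
        apply sum_le_sum
        intro x hx
        rw [div_le_iff₀ hA0, mul_comm]
        exact hR x (mem_filter.1 hx).1
      simp only [sum_const, nsmul_eq_mul, card_univ] at h1 h3
      rw [h2] at h1
      have : (U.card : ℝ) * ((Fintype.card Ω : ℝ) / A) = Fintype.card Ω * ((U.card : ℝ) / A) := by
        ring
      linarith
    obtain ⟨h, hh⟩ := this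
    refine ⟨insert h H, (card_insert_le _ _).trans (by omega), ?_⟩
    have e : 𝒟.filter (fun x => ∀ g ∈ insert h H, ¬ R g x) = U.filter (fun x => ¬ R h x) := by
      ext x
      simp only [hU, mem_filter, mem_insert, forall_eq_or_imp]
      tauto
    rw [e]
    have h5 : ((U.filter (fun x => R h x)).card : ℝ) + ((U.filter (fun x => ¬ R h x)).card : ℝ)
        = U.card := by
      exact_mod_cast card_filter_add_card_filter_not (s := U) (fun x => R h x)
    have h6 : 0 ≤ 1 - 1 / A := by
      rw [sub_nonneg, div_le_one hA0]; exact hA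
    calc ((U.filter (fun x => ¬ R h x)).card : ℝ) ≤ U.card * (1 - 1 / A) := by
          have : (U.card : ℝ) * (1 - 1 / A) = U.card - U.card / A := by ring
          linarith
      _ ≤ (𝒟.card * (1 - 1 / A) ^ t) * (1 - 1 / A) := mul_le_mul_of_nonneg_right hc h6
      _ = _ := by ring

/-- perfect hash families -/
lemma hash_family {m q K : ℕ} (hm : 1 ≤ m) (hK : 1 ≤ K) (hq : 2 * K ≤ q) :
    ∃ H : Finset (Fin m → Fin q), H.card ≤ 2 ^ K * m ∧
      ∀ D : Finset (Fin m), D.card ≤ K → ∃ h ∈ H, Set.InjOn h (D : Set (Fin m)) := by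
  classical
  have : Nonempty (Fin q) := ⟨⟨0, by omega⟩⟩
  have hpow : (1 : ℝ) ≤ 2 ^ K := one_le_pow₀ (by norm_num)
  obtain ⟨H, hH, hc⟩ := cover (Ω := Fin m → Fin q) (X := Finset (Fin m))
    (fun h D => Set.InjOn h (D : Set (Fin m)))
    (univ.filter (fun D : Finset (Fin m) => D.card ≤ K)) ((2 : ℝ) ^ K) hpow
    (by
      intro D hD
      have hD' := (mem_filter.1 hD).2
      have h1 := inj_count hq D hD'
      have h2 : q ^ m ≤ 2 ^ K *
        (univ.filter (fun h : Fin m → Fin q => Set.InjOn h (D : Set (Fin m)))).card :=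
        h1.trans (Nat.mul_le_mul_right _ (Nat.pow_le_pow_right (by norm_num) hD'))
      simp only [Fintype.card_pi, Fintype.card_fin, prod_const, card_univ]
      exact_mod_cast h2) (2 ^ K * m)
  refine ⟨H, hH, ?_⟩
  by_contra! hcon
  obtain ⟨D, hD, hD2⟩ := hcon
  have hpos : (1 : ℝ) ≤ (((univ.filter (fun D : Finset (Fin m) => D.card ≤ K)).filter
      (fun x : Finset (Fin m) => ∀ h ∈ H, ¬ Set.InjOn h (x : Set (Fin m)))).card : ℝ) := by
    have : 0 < ((univ.filter (fun D : Finset (Fin m) => D.card ≤ K)).filter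
      (fun x : Finset (Fin m) => ∀ h ∈ H, ¬ Set.InjOn h (x : Set (Fin m)))).card :=
      card_pos.2 ⟨D, by simp only [mem_filter, mem_univ, true_and]; exact ⟨hD, hD2⟩⟩
    exact_mod_cast this
  have h1 : ((univ.filter (fun D : Finset (Fin m) => D.card ≤ K)).card : ℝ) ≤ 2 ^ m := by
    have := card_filter_le (univ : Finset (Finset (Fin m))) (fun D => D.card ≤ K)
    simp only [card_univ, Fintype.card_finset, Fintype.card_fin] at this
    exact_mod_cast this
  have h0 : (0 : ℝ) ≤ 1 - 1 / 2 ^ K := by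
    rw [sub_nonneg, div_le_one (by positivity)]; exact hpow
  have h2 : (1 - 1 / (2 : ℝ) ^ K) ^ (2 ^ K * m) ≤ Real.exp (-1) ^ m := by
    rw [pow_mul]
    apply pow_le_pow_left₀ (by positivity)
    calc (1 - 1 / (2 : ℝ) ^ K) ^ (2 ^ K) ≤ (Real.exp (-(1 / 2 ^ K))) ^ (2 ^ K) := by
          apply pow_le_pow_left₀ h0
          have := Real.add_one_le_exp (-(1 / (2 : ℝ) ^ K))
          linarith
      _ = Real.exp (-1) := by
          rw [← Real.exp_nat_mul]
          congr 1
          push_cast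
          field_simp
  have h3 : (2 : ℝ) ^ m * Real.exp (-1) ^ m < 1 := by
    rw [← mul_pow]
    apply pow_lt_one₀ (by positivity) _ (by omega)
    rw [Real.exp_neg]
    have := Real.exp_one_gt_d9
    rw [← div_eq_mul_inv, div_lt_one (by positivity)]
    linarith
  have h4 := mul_le_mul h1 h2 (by positivity) (by positivity)
  linarith

/-- load contributed by a choice -/
noncomputable def ld {ι κ : Type*} {N : ℕ} (b : κ → Fin N) (w : ι → κ → ℝ) (i : ι) (c : Option κ)
    (B : Fin N) : ℝ := c.elim 0 (fun o => if b o = B then w i o else 0)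

lemma greedy {ι κ : Type*} [DecidableEq ι] {N : ℕ} (b : κ → Fin N)
    (L : ℕ) (hL : 0 < L) (Q : ℝ) (hQ : 0 < Q) (O : ι → Finset κ)
    (hO : ∀ i, (O i).card ≤ L) (w : ι → κ → ℝ) (hw : ∀ i o, 0 ≤ w i o) (hwQ : ∀ i o, w i o ≤ Q)
    (x : ι → κ → ℝ) (hx : ∀ i o, 0 ≤ x i o) (S : Finset ι) :
    ∀ W : Fin N → ℝ, (∀ B, 0 ≤ W B) → ∃ c : ι → Option κ,
      (∀ i ∈ S, ∀ o, c i = some o → o ∈ O i) ∧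
      (∀ B, ∑ i ∈ S, ld b w i (c i) B = 0 ∨ W B + ∑ i ∈ S, ld b w i (c i) B ≤ 2 * Q) ∧
      ∑ i ∈ S, ∑ o ∈ O i, x i o / L * (1 - (W (b o) +
        ∑ j ∈ S, ∑ p ∈ O j, ld b w j (some p) (b o) / L) / Q) ≤
      ∑ i ∈ S, (c i).elim 0 (x i) := by
  classical
  have hL' : (0 : ℝ) < L := by exact_mod_cast hL
  induction S using Finset.induction_on with
  | empty => exact fun W _ => ⟨fun _ => none, by simp, by simp, by simp⟩
  | insert a S ha ih =>
    intro W hW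
    set F : (Fin N → ℝ) → ℝ := fun W => ∑ i ∈ S, ∑ o ∈ O i, x i o / L * (1 - (W (b o) +
        ∑ j ∈ S, ∑ p ∈ O j, ld b w j (some p) (b o) / L) / Q) with hF
    set G : (Fin N → ℝ) → ℝ := fun U => ∑ i ∈ S, ∑ o ∈ O i, x i o / L * (U (b o)) / Q with hG
    have hlin : ∀ W U : Fin N → ℝ, F (W + U) = F W - G U := by
      intro W U
      simp only [hF, hG, ← sum_sub_distrib, Pi.add_apply]
      refine sum_congr rfl fun i _ => sum_congr rfl fun o _ => ?_
      ring
    set V := ∑ i ∈ insert a S, ∑ o ∈ O i, x i o / L * (1 - (W (b o) +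
        ∑ j ∈ insert a S, ∑ p ∈ O j, ld b w j (some p) (b o) / L) / Q) with hV
    have ldnn : ∀ i (c : Option κ) B, 0 ≤ ld b w i c B := by
      intro i c B
      cases c with
      | none => simp [ld]
      | some o => simp only [ld, Option.elim]; split_ifs; exacts [hw i o, le_rfl]
    have hVle : V ≤ ∑ o ∈ O a, x a o / L * (1 - W (b o) / Q)
        + (F W - ∑ p ∈ O a, G (ld b w a (some p)) / L) := by
      rw [hV, sum_insert ha]
      apply add_le_add
      · apply sum_le_sum
        intro o _
        apply mul_le_mul_of_nonneg_left _ (div_nonneg (hx a o) hL'.le)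
        apply sub_le_sub_left
        apply div_le_div_of_nonneg_right _ hQ.le
        have : 0 ≤ ∑ j ∈ insert a S, ∑ p ∈ O j, ld b w j (some p) (b o) / L :=
          sum_nonneg fun j _ => sum_nonneg fun p _ => div_nonneg (ldnn _ _ _) hL'.le
        linarith
      · have e1 : ∑ p ∈ O a, G (ld b w a (some p)) / L
            = G (fun B => ∑ p ∈ O a, ld b w a (some p) B / L) := by
          simp only [hG, sum_div, mul_sum]
          rw [sum_comm]
          refine sum_congr rfl fun i _ => ?_
          rw [sum_comm]
          refine sum_congr rfl fun o _ => sum_congr rfl fun p _ => ?_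
          ring
        rw [e1, ← hlin W (fun B => ∑ p ∈ O a, ld b w a (some p) B / L)]
        apply le_of_eq
        refine sum_congr rfl fun i _ => sum_congr rfl fun o _ => ?_
        rw [sum_insert ha]
        simp only [Pi.add_apply]
        ring
    by_cases hcase : V ≤ F W
    · obtain ⟨c, h1, h2, h3⟩ := ih W hW
      have hne : ∀ i ∈ S, i ≠ a := fun i hi e => ha (e ▸ hi)
      refine ⟨Function.update c a none, ?_, ?_, ?_⟩
      · intro i hi o ho
        by_cases hia : i = a
        · subst hia; simp at ho
        · rw [Function.update_of_ne hia] at ho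
          exact h1 i ((mem_insert.1 hi).resolve_left hia) o ho
      · intro B
        rw [sum_insert ha]
        have : ∑ i ∈ S, ld b w i (Function.update c a none i) B = ∑ i ∈ S, ld b w i (c i) B :=
          sum_congr rfl fun i hi => by rw [Function.update_of_ne (hne i hi)]
        rw [this]
        simpa [ld] using h2 B
      · rw [sum_insert ha]
        have : ∑ i ∈ S, (Function.update c a none i).elim 0 (x i) = ∑ i ∈ S, (c i).elim 0 (x i) :=
          sum_congr rfl fun i hi => by rw [Function.update_of_ne (hne i hi)]
        rw [this]
        simp only [Function.update_self, Option.elim, zero_add]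
        exact hcase.trans h3
    · push Not at hcase
      have hex : ∃ p ∈ O a, V ≤ x a p * (1 - W (b p) / Q) + F (W + ld b w a (some p)) := by
        by_contra! hcon
        have hsum : V - F W ≤ ∑ p ∈ O a,
            (x a p * (1 - W (b p) / Q) + F (W + ld b w a (some p)) - F W) / L := by
          have : ∑ p ∈ O a,
            (x a p * (1 - W (b p) / Q) + F (W + ld b w a (some p)) - F W) / L =
            ∑ o ∈ O a, x a o / L * (1 - W (b o) / Q) - ∑ p ∈ O a, G (ld b w a (some p)) / L := by
            rw [← sum_sub_distrib]
            refine sum_congr rfl fun p _ => ?_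
            rw [hlin]; ring
          rw [this]; linarith
        have hne : (O a).Nonempty := by
          rw [nonempty_iff_ne_empty]
          intro h
          rw [h] at hsum
          simp at hsum
          linarith
        have hlt : ∑ p ∈ O a,
            (x a p * (1 - W (b p) / Q) + F (W + ld b w a (some p)) - F W) / L
            < ∑ p ∈ O a, (V - F W) / L := by
          apply sum_lt_sum_of_nonempty hne
          intro p hp
          apply div_lt_div_of_pos_right _ hL'
          linarith [hcon p hp]
        rw [sum_const, nsmul_eq_mul] at hlt
        have hcard : ((O a).card : ℝ) ≤ L := by exact_mod_cast hO a
        have : ((O a).card : ℝ) * ((V - F W) / L) ≤ L * ((V - F W) / L) :=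
          mul_le_mul_of_nonneg_right hcard (div_nonneg (by linarith) hL'.le)
        rw [mul_div_cancel₀ _ hL'.ne'] at this
        linarith
      obtain ⟨p, hp, hpV⟩ := hex
      obtain ⟨c, h1, h2, h3⟩ := ih (W + ld b w a (some p))
        (fun B => add_nonneg (hW B) (ldnn _ _ _))
      have hne : ∀ i ∈ S, i ≠ a := fun i hi e => ha (e ▸ hi)
      set d : Option κ := if W (b p) ≤ Q then some p else none with hd
      refine ⟨Function.update c a d, ?_, ?_, ?_⟩
      · intro i hi o ho
        by_cases hia : i = a
        · subst hia
          rw [Function.update_self, hd] at ho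
          split_ifs at ho
          cases ho; exact hp
        · rw [Function.update_of_ne hia] at ho
          exact h1 i ((mem_insert.1 hi).resolve_left hia) o ho
      · intro B
        rw [sum_insert ha]
        have : ∑ i ∈ S, ld b w i (Function.update c a d i) B = ∑ i ∈ S, ld b w i (c i) B :=
          sum_congr rfl fun i hi => by rw [Function.update_of_ne (hne i hi)]
        rw [this, Function.update_self]
        have hB := h2 B
        simp only [Pi.add_apply] at hB
        have hnn := ldnn a (some p) B
        by_cases hWp : W (b p) ≤ Q
        · rw [hd, if_pos hWp]
          rcases hB with hB | hB
          · rw [hB]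
            by_cases hpB : b p = B
            · right
              have : ld b w a (some p) B = w a p := by simp [ld, hpB]
              rw [this, ← hpB]
              linarith [hwQ a p]
            · left; simp [ld, hpB]
          · right; linarith
        · rw [hd, if_neg hWp]
          have : ld b w a none B = 0 := rfl
          rw [this]
          rcases hB with hB | hB
          · left; linarith
          · right; linarith
      · rw [sum_insert ha]
        have : ∑ i ∈ S, (Function.update c a d i).elim 0 (x i) = ∑ i ∈ S, (c i).elim 0 (x i) :=
          sum_congr rfl fun i hi => by rw [Function.update_of_ne (hne i hi)]
        rw [this, Function.update_self]
        have hgain : x a p * (1 - W (b p) / Q) ≤ d.elim 0 (x a) := by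
          by_cases hWp : W (b p) ≤ Q
          · rw [hd, if_pos hWp]
            simp only [Option.elim]
            have : 0 ≤ W (b p) / Q := div_nonneg (hW _) hQ.le
            nlinarith [hx a p]
          · rw [hd, if_neg hWp]
            simp only [Option.elim]
            push Not at hWp
            have : 1 ≤ W (b p) / Q := by rw [one_le_div hQ]; exact hWp.le
            nlinarith [hx a p]
        have h3' : F (W + ld b w a (some p)) ≤ ∑ i ∈ S, (c i).elim 0 (x i) := h3
        linarith

/-- splitting a finite set in chunks of size at most `Q` -/
lemma chunks {α : Type*} [DecidableEq α] (S : Finset α) (Q : ℕ) (hQ : 0 < Q) :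
    ∃ π : α → ℕ, (∀ x ∈ S, π x < S.card / Q + 1) ∧
      ∀ j, (S.filter (fun x => π x = j)).card ≤ Q := by
  classical
  let e := S.equivFin
  let f : α → ℕ := fun x => if h : x ∈ S then (e ⟨x, h⟩ : ℕ) else 0
  have hf : ∀ x ∈ S, f x < S.card := by
    intro x hx
    simp only [f, hx, dif_pos]
    exact (e ⟨x, hx⟩).2
  have hinj : Set.InjOn f S := by
    intro x hx y hy hxy
    have hx' : x ∈ S := hx
    have hy' : y ∈ S := hy
    simp only [f, hx', hy', dif_pos] at hxy
    have := e.injective (Fin.ext hxy)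
    simpa using this
  refine ⟨fun x => f x / Q, ?_, ?_⟩
  · intro x hx
    exact Nat.lt_succ_of_le (Nat.div_le_div_right (hf x hx).le)
  · intro j
    have : (S.filter (fun x => f x / Q = j)).card ≤ (Finset.Ico (j * Q) (j * Q + Q)).card := by
      apply card_le_card_of_injOn f
      · intro x hx
        simp only [coe_filter, Set.mem_ofPred_eq] at hx
        have h2 := hx.2
        rw [Nat.div_eq_iff hQ] at h2
        simp only [coe_Ico, Set.mem_Ico]
        omega
      · intro x hx y hy
        simp only [coe_filter, Set.mem_ofPred_eq] at hx hy
        exact hinj hx.1 hy.1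
    simpa using this

lemma subadd_biUnion {α κ : Type*} [DecidableEq α] [DecidableEq κ] (v : Finset α → ℝ)
    (hv : ∀ S T, v (S ∪ T) ≤ v S + v T) (O : Finset κ) (hO : O.Nonempty) (P : κ → Finset α) :
    v (O.biUnion P) ≤ ∑ o ∈ O, v (P o) := by
  induction hO using Finset.Nonempty.cons_induction with
  | singleton a => simp
  | cons a s h hs ih =>
    rw [cons_eq_insert, biUnion_insert, sum_insert h]
    exact (hv _ _).trans (by linarith)

/-- allocation of small sets -/
lemma small {m n N Q q : ℕ} (hN : 0 < N) (hQ : 0 < Q) (β : Fin m → Fin N)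
    (hβ : ∀ B, (univ.filter (fun x => β x = B)).card ≤ N * Q) (H : Finset (Fin m → Fin q))
    (hH : ∀ D : Finset (Fin m), D.card ≤ 2 * Q → ∃ h ∈ H, Set.InjOn h (D : Set (Fin m)))
    (v : Fin n → Finset (Fin m) → ℝ) (hv0 : ∀ i S, 0 ≤ v i S)
    (hvm : ∀ i, ∀ S T : Finset (Fin m), S ⊆ T → v i S ≤ v i T)
    (hvs : ∀ i, ∀ S T : Finset (Fin m), v i (S ∪ T) ≤ v i S + v i T)
    (T : Fin n → Finset (Fin m)) (hTd : ∀ i j, i ≠ j → Disjoint (T i) (T j))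
    (hT : ∀ i, (T i).card ≤ N * Q) :
    ∃ A : Fin n → Finset (Fin m), (∀ i j, i ≠ j → Disjoint (A i) (A j)) ∧
      (∀ i, A i = ∅ ∨ ∃ B, ∃ h ∈ H, ∃ S : Finset (Fin q),
        A i = univ.filter (fun x => β x = B ∧ h x ∈ S)) ∧
      ∑ i, v i (T i) ≤ 4 * N * ∑ i, v i (A i) := by
  classical
  choose π hπ1 hπ2 using fun (i : Fin n) (B : Fin N) =>
    chunks ((T i).filter (fun x => β x = B)) Q hQ
  let O : Fin n → Finset (Σ _ : Fin N, ℕ) := fun i =>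
    univ.sigma (fun B => range (((T i).filter (fun x => β x = B)).card / Q + 1))
  let P : Fin n → (Σ _ : Fin N, ℕ) → Finset (Fin m) := fun i o =>
    (T i).filter (fun x => β x = o.1 ∧ π i o.1 x = o.2)
  have hPT : ∀ i o, P i o ⊆ T i := fun i o => filter_subset _ _
  have hPd : ∀ i o o', o ≠ o' → Disjoint (P i o) (P i o') := by
    intro i o o' hne
    rw [disjoint_left]
    intro x hx hx'
    simp only [P, mem_filter] at hx hx'
    apply hne
    obtain ⟨B, r⟩ := o
    obtain ⟨B', r'⟩ := o'
    obtain ⟨-, h1, h2⟩ := hx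
    obtain ⟨-, h1', h2'⟩ := hx'
    simp only at h1 h2 h1' h2'
    subst h1; subst h1'; subst h2; subst h2'
    rfl
  have hPQ : ∀ i o, (P i o).card ≤ Q := by
    intro i o
    have := hπ2 i o.1 o.2
    rwa [filter_filter] at this
  have hOc : ∀ i, (O i).card ≤ 2 * N := by
    intro i
    have e1 : (O i).card = ∑ B, (((T i).filter (fun x => β x = B)).card / Q) + N := by
      simp only [O, card_sigma, card_range, sum_add_distrib, sum_const, card_univ,
        Fintype.card_fin, smul_eq_mul, mul_one]
    have e2 : ∑ B, ((T i).filter (fun x => β x = B)).card = (T i).card :=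
      (card_eq_sum_card_fiberwise (fun x _ => mem_univ (β x))).symm
    have e3 : (∑ B, (((T i).filter (fun x => β x = B)).card / Q)) * Q ≤ N * Q := by
      rw [sum_mul]
      calc _ ≤ ∑ B, ((T i).filter (fun x => β x = B)).card :=
            sum_le_sum fun B _ => Nat.div_mul_le_self _ _
        _ ≤ _ := by rw [e2]; exact hT i
    have := Nat.le_of_mul_le_mul_right e3 hQ
    omega
  have hTU : ∀ i, T i = (O i).biUnion (P i) := by
    intro i
    ext x
    simp only [mem_biUnion]
    constructor
    · intro hx
      refine ⟨⟨β x, π i (β x) x⟩, ?_, ?_⟩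
      · simp only [O, mem_sigma, mem_univ, true_and, mem_range]
        exact hπ1 i (β x) x (by simp [hx])
      · simp [P, hx]
    · rintro ⟨o, _, ho⟩
      exact hPT i o ho
  have hOne : ∀ i, (O i).Nonempty := fun i => ⟨⟨⟨0, hN⟩, 0⟩,
    mem_sigma.2 ⟨mem_univ _, mem_range.2 (Nat.succ_pos _)⟩⟩
  have hvT : ∀ i, v i (T i) ≤ ∑ o ∈ O i, v i (P i o) := by
    intro i
    conv_lhs => rw [hTU i]
    exact subadd_biUnion (v i) (hvs i) (O i) (hOne i) (P i)
  have hNr : (0 : ℝ) < N := by exact_mod_cast hN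
  have hQr : (0 : ℝ) < Q := by exact_mod_cast hQ
  obtain ⟨c, hc1, hc2, hc3⟩ := greedy (ι := Fin n) (κ := Σ _ : Fin N, ℕ) (fun o => o.1) (2 * N)
    (by omega) (Q : ℝ) hQr O hOc (fun i o => ((P i o).card : ℝ)) (fun i o => Nat.cast_nonneg _)
    (fun i o => by exact_mod_cast hPQ i o) (fun i o => v i (P i o)) (fun i o => hv0 _ _) univ
    (fun _ => 0) (fun _ => le_rfl)
  -- expected load
  have hload : ∀ B : Fin N, ∑ j, ∑ p ∈ O j,
      ld (fun o : (Σ _ : Fin N, ℕ) => o.1) (fun i o => ((P i o).card : ℝ)) j (some p) B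
        / ((2 * N : ℕ) : ℝ) ≤ Q / 2 := by
    intro B
    have h1 : ∀ j, ∑ p ∈ O j,
      ld (fun o : (Σ _ : Fin N, ℕ) => o.1) (fun i o => ((P i o).card : ℝ)) j (some p) B ≤
        (((T j).filter (fun x => β x = B)).card : ℝ) := by
      intro j
      simp only [ld, Option.elim]
      rw [← sum_filter, ← Nat.cast_sum, ← card_biUnion (fun o _ o' _ hne => hPd j o o' hne)]
      rw [Nat.cast_le]
      apply card_le_card
      intro x hx
      simp only [mem_biUnion, mem_filter, P] at hx ⊢
      obtain ⟨o, ⟨_, h2⟩, h3, h4, _⟩ := hx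
      exact ⟨h3, h4.trans h2⟩
    have h2 : ∑ j, (((T j).filter (fun x => β x = B)).card : ℝ) ≤ N * Q := by
      rw [← Nat.cast_sum, ← card_biUnion]
      · refine le_trans ?_ (by exact_mod_cast hβ B :
          (((univ.filter (fun x => β x = B)).card : ℕ) : ℝ) ≤ N * Q)
        rw [Nat.cast_le]
        apply card_le_card
        intro x hx
        simp only [mem_biUnion, mem_filter, mem_univ, true_and] at hx ⊢
        exact hx.choose_spec.2
      · intro i _ j _ hne
        exact (hTd i j hne).mono (filter_subset _ _) (filter_subset _ _)
    simp only [← sum_div]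
    rw [div_le_iff₀ (by positivity)]
    have h3 := sum_le_sum fun j (_ : j ∈ univ) => h1 j
    push_cast
    linarith
  have hgain : ∑ i, v i (T i) ≤ 4 * N * ∑ i, (c i).elim 0 (fun o => v i (P i o)) := by
    have h1 : ∑ i, ∑ o ∈ O i, v i (P i o) / ((2 * N : ℕ) : ℝ) * (1 / 2) ≤
        ∑ i, (c i).elim 0 (fun o => v i (P i o)) := by
      refine le_trans ?_ hc3
      refine sum_le_sum fun i _ => sum_le_sum fun o _ => ?_
      apply mul_le_mul_of_nonneg_left _ (div_nonneg (hv0 _ _) (by positivity))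
      have := hload o.1
      have h2 : (0 + ∑ j, ∑ p ∈ O j,
        ld (fun o : (Σ _ : Fin N, ℕ) => o.1) (fun i o => ((P i o).card : ℝ)) j (some p) o.1
        / ((2 * N : ℕ) : ℝ)) / Q ≤ 1 / 2 := by
        rw [div_le_iff₀ hQr]; linarith
      linarith
    have h2 : ∑ i, ∑ o ∈ O i, v i (P i o) / ((2 * N : ℕ) : ℝ) * (1 / 2) =
        (∑ i, ∑ o ∈ O i, v i (P i o)) / (4 * N) := by
      simp only [sum_div]
      refine sum_congr rfl fun i _ => sum_congr rfl fun o _ => ?_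
      push_cast
      field_simp
      norm_num
    rw [h2, div_le_iff₀ (by positivity)] at h1
    have h3 := sum_le_sum fun i (_ : i ∈ univ) => hvT i
    linarith
  -- the union of the pieces in a bin
  let DB : Fin N → Finset (Fin m) := fun B =>
    univ.biUnion (fun i => (c i).elim ∅ (fun o => if o.1 = B then P i o else ∅))
  have hDB : ∀ B, (DB B).card ≤ 2 * Q := by
    intro B
    have h1 : ((DB B).card : ℝ) ≤ ∑ i,
      ld (fun o : (Σ _ : Fin N, ℕ) => o.1) (fun i o => ((P i o).card : ℝ)) i (c i) B := by
      have h2 : (DB B).card ≤ ∑ i,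
        ((c i).elim ∅ (fun o => if o.1 = B then P i o else ∅) : Finset (Fin m)).card :=
        card_biUnion_le
      calc ((DB B).card : ℝ) ≤ ((∑ i,
        ((c i).elim ∅ (fun o => if o.1 = B then P i o else ∅) : Finset (Fin m)).card : ℕ) : ℝ) := by
              exact_mod_cast h2
        _ = _ := by
          rw [Nat.cast_sum]
          refine sum_congr rfl fun i _ => ?_
          cases c i with
          | none => simp [ld]
          | some o =>
            simp only [ld, Option.elim]
            split_ifs <;> simp
    have h3 : ((DB B).card : ℝ) ≤ 2 * Q := by
      rcases hc2 B with h | h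
      · rw [h] at h1; linarith
      · linarith
    exact_mod_cast h3
  choose hh hhH hhI using fun B => hH (DB B) (hDB B)
  let A : Fin n → Finset (Fin m) := fun i => (c i).elim ∅
    (fun o => univ.filter (fun x => β x = o.1 ∧ hh o.1 x ∈ (P i o).image (hh o.1)))
  refine ⟨A, ?_, ?_, ?_⟩
  · intro i j hij
    rw [disjoint_left]
    intro x hx hx'
    simp only [A] at hx hx'
    rcases hci : c i with _ | o
    · simp [hci] at hx
    rcases hcj : c j with _ | o'
    · simp [hcj] at hx'
    simp only [hci, hcj, Option.elim, mem_filter, mem_univ, true_and, mem_image] at hx hx'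
    obtain ⟨hb, y, hy, hyx⟩ := hx
    obtain ⟨hb', y', hy', hyx'⟩ := hx'
    have hoo : o'.1 = o.1 := hb'.symm.trans hb
    rw [hoo] at hyx'
    have hy1 : y ∈ DB o.1 := by
      simp only [DB, mem_biUnion, mem_univ, true_and]
      exact ⟨i, by simp [hci, hy]⟩
    have hy2 : y' ∈ DB o.1 := by
      simp only [DB, mem_biUnion, mem_univ, true_and]
      exact ⟨j, by simp [hcj, hy', hoo]⟩
    have hyy : y = y' := hhI o.1 hy1 hy2 (hyx.trans hyx'.symm)
    subst hyy
    exact disjoint_left.1 (hTd i j hij) (hPT i o hy) (hPT j o' hy')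
  · intro i
    simp only [A]
    rcases hci : c i with _ | o
    · left; rfl
    · right
      exact ⟨o.1, hh o.1, hhH _, (P i o).image (hh o.1), rfl⟩
  · refine hgain.trans ?_
    apply mul_le_mul_of_nonneg_left _ (by positivity)
    refine sum_le_sum fun i _ => ?_
    simp only [A]
    rcases hci : c i with _ | o
    · exact hv0 _ _
    · simp only [Option.elim]
      apply hvm
      intro x hx
      simp only [mem_filter, mem_univ, true_and]
      exact ⟨(mem_filter.1 hx).2.1, mem_image_of_mem _ hx⟩

/-- one bidder among few large ones -/
lemma large {m n N Q : ℕ} (hN : 0 < N) (hQ : 0 < Q) (hm : m ≤ N * N * Q)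
    (v : Fin n → Finset (Fin m) → ℝ) (hv0 : ∀ i S, 0 ≤ v i S)
    (hvm : ∀ i, ∀ S T : Finset (Fin m), S ⊆ T → v i S ≤ v i T)
    (T : Fin n → Finset (Fin m)) (hTd : ∀ i j, i ≠ j → Disjoint (T i) (T j)) :
    ∃ A : Fin n → Finset (Fin m), (∀ i j, i ≠ j → Disjoint (A i) (A j)) ∧
      (∀ i, A i = ∅ ∨ A i = univ) ∧
      ∑ i ∈ univ.filter (fun i => ¬ (T i).card ≤ N * Q), v i (T i) ≤ N * ∑ i, v i (A i) := by
  classical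
  set Z := univ.filter (fun i => ¬ (T i).card ≤ N * Q) with hZ
  rcases Z.eq_empty_or_nonempty with h | h
  · refine ⟨fun _ => ∅, by simp, by simp, ?_⟩
    rw [h, sum_empty]
    exact mul_nonneg (by positivity) (sum_nonneg fun i _ => hv0 _ _)
  · obtain ⟨a, ha, hmax⟩ := exists_max_image Z (fun i => v i (T i)) h
    have hcard : Z.card ≤ N := by
      have h1 : Z.card * (N * Q) ≤ ∑ i ∈ Z, (T i).card := by
        rw [← smul_eq_mul]
        apply card_nsmul_le_sum
        intro i hi
        have := (mem_filter.1 hi).2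
        omega
      rw [← card_biUnion (fun i _ j _ hne => hTd i j hne)] at h1
      have h2 := card_le_univ (Z.biUnion T)
      rw [Fintype.card_fin] at h2
      have h3 : Z.card * (N * Q) ≤ N * (N * Q) := by
        calc _ ≤ m := h1.trans h2
          _ ≤ N * N * Q := hm
          _ = _ := by ring
      exact Nat.le_of_mul_le_mul_right h3 (by positivity)
    refine ⟨fun i => if i = a then univ else ∅, ?_, ?_, ?_⟩
    · intro i j hij
      by_cases hi : i = a
      · have : j ≠ a := fun e => hij (hi.trans e.symm)
        simp [this]
      · simp [hi]
    · intro i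
      by_cases hi : i = a <;> simp [hi]
    · have h1 : ∑ i ∈ Z, v i (T i) ≤ Z.card * v a (T a) := by
        rw [← nsmul_eq_mul]
        exact sum_le_card_nsmul _ _ _ hmax
      have h2 : v a (T a) ≤ ∑ i, v i (if i = a then univ else ∅) := by
        calc v a (T a) ≤ v a univ := hvm a _ _ (subset_univ _)
          _ = v a (if a = a then univ else ∅) := by simp
          _ ≤ _ := single_le_sum (f := fun i => v i (if i = a then univ else ∅))
              (fun i _ => hv0 i _) (mem_univ a)
      have h3 : (Z.card : ℝ) ≤ N := by exact_mod_cast hcard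
      calc _ ≤ _ := h1
        _ ≤ N * v a (T a) := mul_le_mul_of_nonneg_right h3 (hv0 _ _)
        _ ≤ _ := mul_le_mul_of_nonneg_left h2 (by positivity)

end SubaddMech

/-- there are universal constants `c, C > 0` such that for every `m ≥ 2`, `n ≥ 1`,
and `C·log₂ m ≤ k ≤ m`, there is a bank `𝒜` of allocations in which at most `2^(c·k)` distinct
sets can ever be received by a bidder, and whose welfare-maximal element is a
`√(m/k)`-approximation to the optimal welfare for all monotone subadditive nonnegative
valuations. -/
theorem subadditive_mechanism_exists :
    ∃ c C : ℝ, 0 < c ∧ 0 < C ∧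
      ∀ m n k : ℕ, 2 ≤ m → 1 ≤ n → C * Real.logb 2 m ≤ (k : ℝ) → k ≤ m →
        ∃ 𝒜 : Set (Fin n → Finset (Fin m)),
          (∀ A ∈ 𝒜, ∀ i j : Fin n, i ≠ j → Disjoint (A i) (A j)) ∧
          ((({S : Finset (Fin m) | ∃ A ∈ 𝒜, ∃ i : Fin n, A i = S}).ncard : ℝ)
              ≤ (2 : ℝ) ^ (c * (k : ℝ))) ∧
          (∀ v : Fin n → Finset (Fin m) → ℝ,
            (∀ i S, 0 ≤ v i S) →
            (∀ i, ∀ S T : Finset (Fin m), S ⊆ T → v i S ≤ v i T) →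
            (∀ i, ∀ S T : Finset (Fin m), v i (S ∪ T) ≤ v i S + v i T) →
            ∀ A' : Fin n → Finset (Fin m),
              (∀ i j : Fin n, i ≠ j → Disjoint (A' i) (A' j)) →
              ∃ A ∈ 𝒜, Real.sqrt ((k : ℝ) / m) * ∑ i, v i (A' i) ≤ ∑ i, v i (A i)) := by
  classical
  refine ⟨2048, 1, by norm_num, by norm_num, ?_⟩
  intro m n k hm hn hk hkm
  have hm0 : (0 : ℝ) < m := by exact_mod_cast (by omega : 0 < m)
  have hmk : m ≤ 2 ^ k := by
    have h1 : Real.logb 2 m ≤ k := by linarith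
    rw [Real.logb_le_iff_le_rpow (by norm_num) hm0, Real.rpow_natCast] at h1
    exact_mod_cast h1
  have hk1 : 1 ≤ k := by
    rcases Nat.eq_zero_or_pos k with h | h
    · subst h; simp at hmk; omega
    · exact h
  have hk0 : (0 : ℝ) < k := by exact_mod_cast hk1
  have hpow : ∀ t : ℕ, t ≤ 2048 * k → ((2 ^ t : ℕ) : ℝ) ≤ (2 : ℝ) ^ ((2048 : ℝ) * (k : ℝ)) := by
    intro t ht
    push_cast
    rw [← Real.rpow_natCast]
    apply Real.rpow_le_rpow_of_exponent_le (by norm_num)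
    exact_mod_cast ht
  by_cases hQm : m ≤ 256 * k
  · refine ⟨{A | ∀ i j : Fin n, i ≠ j → Disjoint (A i) (A j)}, fun A hA => hA, ?_, ?_⟩
    · refine le_trans ?_ (hpow m (by omega))
      rw [Nat.cast_le]
      refine (Set.ncard_le_card _).trans ?_
      simp
    · intro v hv0 hvm hvs A' hA'
      refine ⟨A', hA', ?_⟩
      have h1 : Real.sqrt ((k : ℝ) / m) ≤ 1 := by
        rw [Real.sqrt_le_one, div_le_one hm0]
        exact_mod_cast hkm
      have h2 : 0 ≤ ∑ i, v i (A' i) := Finset.sum_nonneg fun i _ => hv0 _ _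
      nlinarith
  · push Not at hQm
    set Q := 256 * k with hQ
    have hQ0 : 0 < Q := by omega
    set N := Nat.sqrt (m / Q) + 1 with hN
    have hN0 : 0 < N := by omega
    have hdiv : 1 ≤ m / Q := (Nat.one_le_div_iff hQ0).2 hQm.le
    have hs1 : 1 ≤ Nat.sqrt (m / Q) := by
      rw [Nat.le_sqrt]; simpa using hdiv
    have hNN : m ≤ N * N * Q := by
      have h1 : m / Q < N * N := Nat.lt_succ_sqrt (m / Q)
      exact ((Nat.div_lt_iff_lt_mul hQ0).1 h1).le
    have hNk : 64 * (N * N) * k ≤ m := by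
      have h1 : Nat.sqrt (m / Q) * Nat.sqrt (m / Q) ≤ m / Q := Nat.sqrt_le _
      have h2 : N * N ≤ 4 * (m / Q) := by nlinarith
      have h3 : m / Q * Q ≤ m := Nat.div_mul_le_self _ _
      nlinarith
    have hNm : N ≤ m := by nlinarith
    obtain ⟨H, hHc, hH⟩ := SubaddMech.hash_family (m := m) (q := 4 * Q) (K := 2 * Q) (by omega)
      (by omega) (by omega)
    let β : Fin m → Fin N := fun x => ⟨x % N, Nat.mod_lt _ hN0⟩
    have hβ : ∀ B, (Finset.univ.filter (fun x => β x = B)).card ≤ N * Q := by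
      intro B
      have : (Finset.univ.filter (fun x => β x = B)).card ≤ (Finset.range (N * Q)).card := by
        apply Finset.card_le_card_of_injOn (fun x : Fin m => (x : ℕ) / N)
        · intro x _
          simp only [Finset.coe_range, Set.mem_Iio]
          rw [Nat.div_lt_iff_lt_mul hN0]
          have := x.2
          nlinarith
        · intro x hx y hy hxy
          simp only [Finset.coe_filter, Finset.mem_univ, true_and, Set.mem_ofPred_eq] at hx hy
          have h1 : (x : ℕ) % N = (y : ℕ) % N := by
            have := hx.trans hy.symm
            simpa [β] using this
          simp only at hxy
          apply Fin.ext
          rw [← Nat.div_add_mod (x : ℕ) N, ← Nat.div_add_mod (y : ℕ) N, h1, hxy]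
      simpa using this
    let 𝓕 : Finset (Finset (Fin m)) := insert ∅ (insert Finset.univ
      (((Finset.univ : Finset (Fin N)) ×ˢ H ×ˢ (Finset.univ : Finset (Finset (Fin (4 * Q))))).image
        (fun p => Finset.univ.filter (fun x => β x = p.1 ∧ p.2.1 x ∈ p.2.2))))
    have hFc : 𝓕.card ≤ 2 ^ (2048 * k) := by
      have h1 : 𝓕.card ≤ N * (H.card * 2 ^ (4 * Q)) + 1 + 1 := by
        refine (Finset.card_insert_le _ _).trans (Nat.succ_le_succ ?_)
        refine (Finset.card_insert_le _ _).trans (Nat.succ_le_succ ?_)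
        refine Finset.card_image_le.trans ?_
        simp [Finset.card_product]
      have h2 : N * (H.card * 2 ^ (4 * Q)) ≤ 2 ^ k * ((2 ^ (2 * Q) * 2 ^ k) * 2 ^ (4 * Q)) := by
        gcongr
        · exact hNm.trans hmk
        · exact hHc.trans (by gcongr)
      have h3 : 2 ^ k * ((2 ^ (2 * Q) * 2 ^ k) * 2 ^ (4 * Q)) = 2 ^ (2 * k + 6 * Q) := by
        ring
      have h4 : 2 ^ 1 ≤ 2 ^ (2 * k + 6 * Q) := Nat.pow_le_pow_right (by norm_num) (by omega)
      have h5 : 2 ^ (2 * k + 6 * Q + 1) ≤ 2 ^ (2048 * k) :=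
        Nat.pow_le_pow_right (by norm_num) (by omega)
      rw [pow_succ] at h5
      omega
    refine ⟨{A | (∀ i j : Fin n, i ≠ j → Disjoint (A i) (A j)) ∧ ∀ i, A i ∈ 𝓕},
      fun A hA => hA.1, ?_, ?_⟩
    · refine le_trans ?_ (hpow (2048 * k) le_rfl)
      rw [Nat.cast_le]
      refine le_trans ?_ hFc
      rw [← Set.ncard_coe_finset]
      apply Set.ncard_le_ncard _ (Finset.finite_toSet _)
      rintro S ⟨A, hA, i, rfl⟩
      exact hA.2 i
    · intro v hv0 hvm hvs A' hA'
      let T : Fin n → Finset (Fin m) := fun i => if (A' i).card ≤ N * Q then A' i else ∅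
      have hTs : ∀ i, T i ⊆ A' i := by
        intro i
        simp only [T]
        split_ifs
        · exact subset_rfl
        · exact Finset.empty_subset _
      obtain ⟨A1, hd1, hf1, hg1⟩ := SubaddMech.small hN0 hQ0 β hβ H hH v hv0 hvm hvs T
        (fun i j hij => (hA' i j hij).mono (hTs i) (hTs j))
        (by
          intro i
          simp only [T]
          split_ifs with h
          · exact h
          · simp)
      obtain ⟨A2, hd2, hf2, hg2⟩ := SubaddMech.large hN0 hQ0 hNN v hv0 hvm A' hA'
      have hsplit : ∑ i, v i (A' i) ≤ ∑ i, v i (T i) +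
          ∑ i ∈ Finset.univ.filter (fun i => ¬ (A' i).card ≤ N * Q), v i (A' i) := by
        rw [Finset.sum_filter, ← Finset.sum_add_distrib]
        refine Finset.sum_le_sum fun i _ => ?_
        simp only [T]
        by_cases h : (A' i).card ≤ N * Q
        · simp [h]
        · simp only [h, if_false, not_false_eq_true, if_true]
          linarith [hv0 i ∅]
      have hsq : Real.sqrt ((k : ℝ) / m) * (8 * N) ≤ 1 := by
        have h1 : (k : ℝ) / m ≤ (1 / (8 * N)) ^ 2 := by
          have h2 : (64 * (N * N) * k : ℝ) ≤ m := by exact_mod_cast hNk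
          have hNr : (0 : ℝ) < N := by exact_mod_cast hN0
          rw [div_pow, div_le_div_iff₀ hm0 (by positivity)]
          nlinarith
        have h3 := Real.sqrt_le_sqrt h1
        have hNr : (0 : ℝ) < N := by exact_mod_cast hN0
        rw [Real.sqrt_sq (by positivity)] at h3
        rwa [le_div_iff₀ (by positivity)] at h3
      have hfin : ∀ A : Fin n → Finset (Fin m), ∑ i, v i (A' i) ≤ 8 * N * ∑ i, v i (A i) →
          Real.sqrt ((k : ℝ) / m) * ∑ i, v i (A' i) ≤ ∑ i, v i (A i) := by
        intro A hA
        have h0 : 0 ≤ ∑ i, v i (A i) := Finset.sum_nonneg fun i _ => hv0 _ _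
        calc Real.sqrt ((k : ℝ) / m) * ∑ i, v i (A' i)
            ≤ Real.sqrt ((k : ℝ) / m) * (8 * N * ∑ i, v i (A i)) :=
              mul_le_mul_of_nonneg_left hA (Real.sqrt_nonneg _)
          _ = (Real.sqrt ((k : ℝ) / m) * (8 * N)) * ∑ i, v i (A i) := by ring
          _ ≤ 1 * ∑ i, v i (A i) := mul_le_mul_of_nonneg_right hsq h0
          _ = _ := one_mul _
      by_cases hc : ∑ i, v i (A' i) ≤ 2 * ∑ i, v i (T i)
      · refine ⟨A1, ⟨hd1, ?_⟩, hfin A1 (by linarith)⟩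
        intro i
        rcases hf1 i with h | ⟨B, h, hh, S, hS⟩
        · rw [h]; simp [𝓕]
        · refine Finset.mem_insert_of_mem (Finset.mem_insert_of_mem (Finset.mem_image.2
            ⟨(B, h, S), ?_, hS.symm⟩))
          simp [hh]
      · push Not at hc
        refine ⟨A2, ⟨hd2, ?_⟩, hfin A2 ?_⟩
        · intro i
          rcases hf2 i with h | h <;> rw [h] <;> simp [𝓕]
        · have h0 : 0 ≤ (N : ℝ) * ∑ i, v i (A2 i) :=
            mul_nonneg (by positivity) (Finset.sum_nonneg fun i _ => hv0 _ _)
          linarith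
end

section
/- There exist universal constants c, C > 0 such that the following holds. Let m, k be integers with C · log₂(m) ≤ k ≤ m/2, let n = ⌈3·√(m/k)⌉, and let 𝒜 be a set of allocations of the m items to the n bidders such that for every profile of monotone submodular valuations v₁,…,vₙ : 2^[m] → ℝ≥0, max_{A ∈ 𝒜} Σᵢ vᵢ(Aᵢ) ≥ √(k/m) · OPT(v⃗). Then there exists S ⊆ [m] with |S| ≥ c · √(m·k)/ln(m/k) such that 𝒜 2-shatters (S, [n]): for every item j ∈ S there is a set T_j ⊆ [n] with |T_j| = 2 such that for every function g on S with g(j) ∈ T_j for all j ∈ S, there exists an allocation A ∈ 𝒜 in which each item j ∈ S is allocated to bidder g(j). -/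
theorem aux_card_le {β : Type*} (E : Finset β) :
    E.card ≤ 1 + (E.powersetCard 2).card := by
  rw [Finset.card_powersetCard]
  induction E.card with
  | zero => simp
  | succ t ih =>
    rw [Nat.choose_succ_succ' t 1, Nat.choose_one_right]
    rcases Nat.eq_zero_or_pos t with h | h
    · subst h; simp
    · omega

/-- Natarajan-type lemma in generating function form. -/
theorem aux_natarajan {α β : Type*} [DecidableEq α] [Fintype α] [DecidableEq β] [Fintype β]
    (b : β) (y : ℝ) (hy : 1 ≤ y) (R : Finset α) :
    ∀ (D : ℕ) (F : Finset (α → β)), (∀ f ∈ F, ∀ j, j ∉ R → f j = b) →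
      (¬ ∃ S : Finset α, ∃ T : α → Finset β, S ⊆ R ∧ S.card = D ∧ (∀ j ∈ S, (T j).card = 2) ∧
        ∀ g : α → β, (∀ j ∈ S, g j ∈ T j) → ∃ f ∈ F, ∀ j ∈ S, f j = g j) →
      (F.card : ℝ) ≤ y ^ D * (1 + (Fintype.card β).choose 2 / y) ^ R.card := by
  have hy0 : 0 < y := by linarith
  induction R using Finset.induction_on with
  | empty =>
    intro D F hF hS
    have h1 : F.card ≤ 1 := by
      rw [Finset.card_le_one]
      intro f hf g hg
      funext j
      rw [hF f hf j (by simp), hF g hg j (by simp)]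
    have h2 : (F.card : ℝ) ≤ 1 := by exact_mod_cast h1
    have h3 : 1 ≤ y ^ D := one_le_pow₀ hy
    simp
    linarith
  | insert a R ha ih =>
    intro D F hF hS
    cases D with
    | zero =>
      have : F = ∅ := by
        by_contra hne
        obtain ⟨f, hf⟩ := Finset.nonempty_iff_ne_empty.mpr hne
        exact hS ⟨∅, fun _ => ∅, by simp, by simp, by simp, fun g _ => ⟨f, hf, by simp⟩⟩
      subst this
      simp
      positivity
    | succ D =>
      set N : ℕ := (Fintype.card β).choose 2 with hN
      let U : Finset (α → β) := F.image (fun f => Function.update f a b)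
      let E : (α → β) → Finset β := fun h => Finset.univ.filter (fun i => Function.update h a i ∈ F)
      let I : Finset β → Finset (α → β) := fun p => U.filter (fun h => p ⊆ E h)
      have hUR : ∀ h ∈ U, ∀ j, j ∉ R → h j = b := by
        intro h hh j hj
        obtain ⟨f, hf, rfl⟩ := Finset.mem_image.mp hh
        by_cases hja : j = a
        · subst hja; simp
        · simp only [Function.update_of_ne hja]
          exact hF f hf j (by simp [hja, hj])
      have hcard1 : F.card ≤ ∑ h ∈ U, (E h).card := by
        rw [Finset.card_eq_sum_card_image (fun f => Function.update f a b) F]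
        apply Finset.sum_le_sum
        intro h hh
        apply Finset.card_le_card_of_injOn (fun f => f a)
        · intro f hf
          simp only [Finset.coe_filter, Set.mem_setOf_eq] at hf
          simp only [E, Finset.coe_filter, Set.mem_setOf_eq, Finset.mem_univ, true_and]
          rw [← hf.2]
          simpa using hf.1
        · intro f hf f' hf' hff
          simp only [Finset.coe_filter, Set.mem_setOf_eq] at hf hf'
          have h1 := hf.2.trans hf'.2.symm
          funext j
          by_cases hja : j = a
          · subst hja; exact hff
          · have := congrFun h1 j
            simpa [Function.update_of_ne hja] using this
      have hcard2 : ∑ h ∈ U, ((E h).powersetCard 2).card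
          = ∑ p ∈ (Finset.univ : Finset β).powersetCard 2, (I p).card := by
        have h1 : ∀ h ∈ U, ((E h).powersetCard 2).card
            = ∑ p ∈ (Finset.univ : Finset β).powersetCard 2, if p ⊆ E h then 1 else 0 := by
          intro h _
          rw [← Finset.card_filter]
          congr 1
          ext p
          simp only [Finset.mem_powersetCard, Finset.mem_filter, Finset.subset_univ, true_and]
          tauto
        rw [Finset.sum_congr rfl h1, Finset.sum_comm]
        apply Finset.sum_congr rfl
        intro p _
        rw [← Finset.card_filter]
      have hcard3 : F.card ≤ U.card + ∑ p ∈ (Finset.univ : Finset β).powersetCard 2, (I p).card := by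
        calc F.card ≤ ∑ h ∈ U, (E h).card := hcard1
          _ ≤ ∑ h ∈ U, (1 + ((E h).powersetCard 2).card) :=
            Finset.sum_le_sum fun h _ => aux_card_le _
          _ = _ := by rw [Finset.sum_add_distrib, hcard2]; simp
      have hU : (U.card : ℝ) ≤ y ^ (D+1) * (1 + N / y) ^ R.card := by
        apply ih (D+1) U hUR
        rintro ⟨S, T, hSR, hSc, hT, hg⟩
        apply hS
        refine ⟨S, T, hSR.trans (Finset.subset_insert _ _), hSc, hT, ?_⟩
        intro g hgT
        obtain ⟨h, hh, hhg⟩ := hg g hgT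
        obtain ⟨f, hf, rfl⟩ := Finset.mem_image.mp hh
        refine ⟨f, hf, fun j hj => ?_⟩
        have hja : j ≠ a := by rintro rfl; exact ha (hSR hj)
        have := hhg j hj
        simpa [Function.update_of_ne hja] using this
      have hI : ∀ p ∈ (Finset.univ : Finset β).powersetCard 2,
          ((I p).card : ℝ) ≤ y ^ D * (1 + N / y) ^ R.card := by
        intro p hp
        apply ih D (I p) (fun h hh => hUR h (Finset.mem_filter.mp hh).1)
        rintro ⟨S, T, hSR, hSc, hT, hg⟩
        apply hS
        have haS : a ∉ S := fun h => ha (hSR h)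
        refine ⟨insert a S, Function.update T a p, Finset.insert_subset_insert _ hSR, ?_, ?_, ?_⟩
        · rw [Finset.card_insert_of_notMem haS, hSc]
        · intro j hj
          by_cases hja : j = a
          · subst hja; simpa using (Finset.mem_powersetCard.mp hp).2
          · rw [Function.update_of_ne hja]
            exact hT j (by simpa [hja] using hj)
        · intro g hgT
          obtain ⟨h, hh, hhg⟩ := hg g (fun j hj => by
            have hja : j ≠ a := by rintro rfl; exact haS hj
            have := hgT j (Finset.mem_insert_of_mem hj)
            simpa [Function.update_of_ne hja] using this)
          have hga : g a ∈ p := by simpa using hgT a (Finset.mem_insert_self _ _)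
          have hE := (Finset.mem_filter.mp hh).2 hga
          refine ⟨Function.update h a (g a), (Finset.mem_filter.mp hE).2, fun j hj => ?_⟩
          by_cases hja : j = a
          · subst hja; simp
          · rw [Function.update_of_ne hja]
            exact hhg j (by simpa [hja] using hj)
      have hsum : (∑ p ∈ (Finset.univ : Finset β).powersetCard 2, ((I p).card : ℝ))
          ≤ N * (y ^ D * (1 + N / y) ^ R.card) := by
        refine (Finset.sum_le_card_nsmul _ _ _ hI).trans ?_
        rw [Finset.card_powersetCard, Finset.card_univ, nsmul_eq_mul]
      have h4 : (F.card : ℝ) ≤ U.card + ∑ p ∈ (Finset.univ : Finset β).powersetCard 2,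
          ((I p).card : ℝ) := by exact_mod_cast hcard3
      rw [Finset.card_insert_of_notMem ha]
      have h5 : y ^ (D+1) * (1 + N / y) ^ (R.card + 1)
          = y ^ (D+1) * (1 + N / y) ^ R.card + N * (y ^ D * (1 + N / y) ^ R.card) := by
        rw [pow_succ (1 + (N:ℝ) / y), pow_succ y]
        field_simp
      rw [h5]
      linarith

/-- Pigeonhole: if each `σ` contains a large piece `P σ`, some piece has many restrictions. -/
theorem aux_pigeon {m n q : ℕ} (b : Fin n) (P : (Fin m → Fin n) → Finset (Fin m))
    (hP : ∀ σ, (P σ).card = q) (hq : q ≤ m) :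
    ∃ R : Finset (Fin m), R.card = q ∧
      n ^ q ≤ m.choose q *
        ((Finset.univ.filter (fun σ => P σ = R)).image (fun σ j => if j ∈ R then σ j else b)).card := by
  have hn : 0 < n := b.pos
  have hmaps : ∀ σ ∈ (Finset.univ : Finset (Fin m → Fin n)),
      P σ ∈ (Finset.univ : Finset (Fin m)).powersetCard q := by
    intro σ _
    simp [Finset.mem_powersetCard, hP]
  have hne : ((Finset.univ : Finset (Fin m)).powersetCard q).Nonempty :=
    ⟨P (fun _ => b), hmaps _ (Finset.mem_univ _)⟩
  obtain ⟨R, hR, hmax⟩ := Finset.exists_max_image _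
    (fun R => (Finset.univ.filter (fun σ => P σ = R)).card) hne
  have hRc := (Finset.mem_powersetCard.mp hR).2
  refine ⟨R, hRc, ?_⟩
  have h1 : n ^ m ≤ m.choose q * (Finset.univ.filter (fun σ => P σ = R)).card := by
    have := Finset.card_eq_sum_card_fiberwise (f := P) hmaps
    have h2 := Finset.sum_le_card_nsmul _ _ _ hmax
    rw [← this] at h2
    simpa using h2
  have h2 : (Finset.univ.filter (fun σ => P σ = R)).card ≤ n ^ (m - q) *
      ((Finset.univ.filter (fun σ => P σ = R)).image
        (fun σ j => if j ∈ R then σ j else b)).card := by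
    apply Finset.card_le_mul_card_image
    intro f _
    have hsub : ((Finset.univ.filter (fun σ => P σ = R)).filter
        (fun σ => (fun j => if j ∈ R then σ j else b) = f)) ⊆
        Fintype.piFinset (fun j => if j ∈ R then {f j} else (Finset.univ : Finset (Fin n))) := by
      intro σ hσ
      rw [Fintype.mem_piFinset]
      intro j
      have h := (Finset.mem_filter.mp hσ).2
      by_cases hj : j ∈ R
      · have := congrFun h j
        simp only [hj, if_true] at this ⊢
        simp [this]
      · simp [hj]
    refine (Finset.card_le_card hsub).trans ?_
    rw [Fintype.card_piFinset]
    have : ∀ j : Fin m, (if j ∈ R then {f j} else (Finset.univ : Finset (Fin n))).card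
        = if j ∈ R then 1 else n := by
      intro j; split_ifs <;> simp
    simp only [this]
    rw [Finset.prod_ite]
    simp only [Finset.prod_const, one_pow, one_mul]
    have : (Finset.univ.filter (fun j => j ∉ R)).card = m - q := by
      rw [Finset.filter_not, Finset.card_sdiff]
      simp [hRc]
    rw [this]
  have h3 : n ^ (m - q) * n ^ q ≤ n ^ (m - q) * (m.choose q *
      ((Finset.univ.filter (fun σ => P σ = R)).image
        (fun σ j => if j ∈ R then σ j else b)).card) := by
    rw [← pow_add, Nat.sub_add_cancel hq]
    refine h1.trans ?_
    refine (Nat.mul_le_mul_left _ h2).trans (le_of_eq ?_)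
    ring
  exact Nat.le_of_mul_le_mul_left h3 (by positivity)

theorem aux_exp : Real.exp (0.09 : ℝ) * Real.exp 1 ≤ 3 := by
  have h1 := Real.exp_one_lt_d9
  have h2 : Real.exp (0.09 : ℝ) ≤ 1 / 0.91 := by
    have := Real.add_one_le_exp (-0.09 : ℝ)
    rw [Real.exp_neg] at this
    have hp := Real.exp_pos (0.09 : ℝ)
    have h3 : (0.91 : ℝ) ≤ (Real.exp 0.09)⁻¹ := by linarith
    rw [one_div]
    exact (le_inv_comm₀ (by norm_num) hp).mp h3
  calc Real.exp (0.09 : ℝ) * Real.exp 1 ≤ (1/0.91) * 2.7182818286 := by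
        apply mul_le_mul h2 h1.le (Real.exp_pos _).le (by norm_num)
    _ ≤ 3 := by norm_num

/-- Counting bound. -/
theorem aux_count {m n q X : ℕ} (hq : 0 < q) (hn : 3 * (m : ℝ) ≤ n * q)
    (hm : 0 < m) (h : n ^ q ≤ m.choose q * X) : Real.exp (0.09 * q) ≤ X := by
  have hq' : (0:ℝ) < q := by exact_mod_cast hq
  have hm' : (0:ℝ) < m := by exact_mod_cast hm
  have h1 : (m.choose q : ℝ) ≤ (m:ℝ) ^ q / q.factorial := Nat.choose_le_pow_div q m
  have h2 : (q:ℝ) ^ q / q.factorial ≤ Real.exp q := Real.pow_div_factorial_le_exp _ hq'.le q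
  have h3 : (n:ℝ) ^ q ≤ m.choose q * X := by exact_mod_cast h
  have hf : (0:ℝ) < q.factorial := by exact_mod_cast q.factorial_pos
  have h4 : (3 * (m:ℝ)) ^ q ≤ (m:ℝ) ^ q * (Real.exp q * X) := by
    calc (3 * (m:ℝ)) ^ q ≤ (n * q) ^ q := by gcongr
      _ = (n:ℝ) ^ q * q ^ q := mul_pow _ _ _
      _ ≤ ((m:ℝ) ^ q / q.factorial * X) * q ^ q := by
        gcongr
        exact h3.trans (by gcongr)
      _ = (m:ℝ) ^ q * ((q:ℝ) ^ q / q.factorial * X) := by ring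
      _ ≤ _ := by gcongr
  rw [mul_pow, mul_comm] at h4
  have h5 : (3:ℝ) ^ q ≤ Real.exp q * X := le_of_mul_le_mul_left h4 (by positivity)
  have h6 : Real.exp (0.09 * q) * Real.exp q ≤ 3 ^ q := by
    have e1 : Real.exp (0.09 * q) = Real.exp 0.09 ^ q := by rw [← Real.exp_nat_mul]; ring_nf
    have e2 : Real.exp (q:ℝ) = Real.exp 1 ^ q := by rw [← Real.exp_nat_mul]; ring_nf
    rw [e1, e2, ← mul_pow]
    exact pow_le_pow_left₀ (by positivity) aux_exp q
  have h7 : Real.exp q * Real.exp (0.09 * q) ≤ Real.exp q * X := by linarith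
  exact le_of_mul_le_mul_left h7 (Real.exp_pos _)

/-- if an allocation bank `𝒜` for `n = ⌈3√(m/k)⌉` bidders is
`√(m/k)`-approximate for monotone submodular valuations, then it 2-shatters a pair `(S, [n])`
with `|S| ≥ c·√(mk)/ln(m/k)`. -/
theorem submodular_approx_implies_two_shattering :
    ∃ c C : ℝ, 0 < c ∧ 0 < C ∧
      ∀ m k n : ℕ, C * Real.logb 2 m ≤ (k : ℝ) → (k : ℝ) ≤ (m : ℝ) / 2 →
        n = ⌈(3 : ℝ) * Real.sqrt ((m : ℝ) / (k : ℝ))⌉₊ →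
        ∀ 𝒜 : Set (Fin n → Finset (Fin m)),
          (∀ A ∈ 𝒜, ∀ i j : Fin n, i ≠ j → Disjoint (A i) (A j)) →
          (∀ v : Fin n → Finset (Fin m) → ℝ,
            (∀ i S, 0 ≤ v i S) →
            (∀ i, ∀ S T : Finset (Fin m), S ⊆ T → v i S ≤ v i T) →
            (∀ i, ∀ S T : Finset (Fin m), v i (S ∪ T) + v i (S ∩ T) ≤ v i S + v i T) →
            ∀ A' : Fin n → Finset (Fin m),
              (∀ i j : Fin n, i ≠ j → Disjoint (A' i) (A' j)) →
              ∃ A ∈ 𝒜, Real.sqrt ((k : ℝ) / m) * ∑ i, v i (A' i) ≤ ∑ i, v i (A i)) →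
          ∃ S : Finset (Fin m),
            c * Real.sqrt ((m : ℝ) * k) / Real.log ((m : ℝ) / k) ≤ (S.card : ℝ) ∧
            ∃ T : Fin m → Finset (Fin n),
              (∀ j ∈ S, (T j).card = 2) ∧
              ∀ g : Fin m → Fin n, (∀ j ∈ S, g j ∈ T j) →
                ∃ A ∈ 𝒜, ∀ j ∈ S, j ∈ A (g j) := by
  refine ⟨0.003, 1000, by norm_num, by norm_num, ?_⟩
  intro m k n hk hkm hn 𝒜 _ hA
  by_cases hk0 : k = 0
  · subst hk0
    obtain ⟨A, hA𝒜, -⟩ := hA (fun _ _ => 0) (by simp) (by simp) (by simp) (fun _ => ∅) (by simp)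
    exact ⟨∅, by simp, fun _ => ∅, by simp, fun g _ => ⟨A, hA𝒜, by simp⟩⟩
  have hkpos : (0:ℝ) < k := by exact_mod_cast Nat.pos_of_ne_zero hk0
  have hmpos : (0:ℝ) < m := by linarith
  have hmnat : 0 < m := by exact_mod_cast hmpos
  set r : ℝ := Real.sqrt ((m:ℝ)/k) with hr
  set s : ℝ := Real.sqrt ((m:ℝ)*k) with hs
  set L : ℝ := Real.log ((m:ℝ)/k) with hL
  have hmk2 : (2:ℝ) ≤ (m:ℝ)/k := by rw [le_div_iff₀ hkpos]; linarith
  have hk1 : (1:ℝ) ≤ k := by exact_mod_cast Nat.pos_of_ne_zero hk0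
  have hr1 : 1 ≤ r := by rw [hr]; exact Real.one_le_sqrt.mpr (by linarith)
  have hr2 : r ^ 2 = (m:ℝ)/k := Real.sq_sqrt (by positivity)
  have hs2 : s ^ 2 = (m:ℝ)*k := Real.sq_sqrt (by positivity)
  have hspos : 0 < s := Real.sqrt_pos.mpr (by positivity)
  have hrs : r * s = m := by
    rw [hr, hs, ← Real.sqrt_mul (by positivity)]
    rw [show (m:ℝ)/k * (m*k) = m^2 by field_simp]
    exact Real.sqrt_sq hmpos.le
  have hsk : (k:ℝ) ≤ s := by
    rw [hs]; apply Real.le_sqrt_of_sq_le; nlinarith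
  have hsm : s ≤ m := by rw [← hrs]; nlinarith
  have hLpos : 0.69 < L := by
    have h1 := Real.log_two_gt_d9
    have h2 : Real.log 2 ≤ L := Real.log_le_log (by norm_num) hmk2
    linarith
  have hLs : 1000 * L ≤ s := by
    have h1 : L ≤ Real.log m := Real.log_le_log (by positivity) (div_le_self hmpos.le hk1)
    have h2 : Real.log m ≤ Real.logb 2 m := by
      rw [Real.logb, le_div_iff₀ (Real.log_pos (by norm_num))]
      have := Real.log_two_lt_d9
      nlinarith
    linarith
  have hnr : 3 * r ≤ n := by rw [hn]; exact Nat.le_ceil _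
  have hnr4 : (n:ℝ) ≤ 4 * r := by
    have : (n:ℝ) < 3 * r + 1 := by rw [hn]; exact Nat.ceil_lt_add_one (by positivity)
    linarith
  have hn3 : (3:ℝ) ≤ n := by linarith
  have hn3' : 3 ≤ n := by exact_mod_cast hn3
  let b : Fin n := ⟨0, by omega⟩
  set q : ℕ := ⌈s⌉₊ with hq
  have hsq : s ≤ q := Nat.le_ceil _
  have hqm : q ≤ m := Nat.ceil_le.mpr hsm
  have hqpos : 0 < q := Nat.ceil_pos.mpr hspos
  -- covering
  have hcov : ∀ σ : Fin m → Fin n, ∃ P : Finset (Fin m), P.card = q ∧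
      ∃ A ∈ 𝒜, ∀ j ∈ P, j ∈ A (σ j) := by
    intro σ
    obtain ⟨A, hA𝒜, hval⟩ := hA (fun i S => ((S.filter (fun j => σ j = i)).card : ℝ))
      (fun i S => by positivity)
      (fun i S T hST => by
        exact_mod_cast Finset.card_le_card (Finset.filter_subset_filter _ hST))
      (fun i S T => by
        rw [Finset.filter_union, Finset.filter_inter_distrib]
        exact_mod_cast (Finset.card_union_add_card_inter _ _).le)
      (fun i => Finset.univ.filter (fun j => σ j = i))
      (fun i i' hii => by
        rw [Finset.disjoint_left]
        intro j h1 h2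
        simp at h1 h2
        exact hii (h1.symm.trans h2))
    have h1 : ∑ i, (((Finset.univ.filter (fun j => σ j = i)).filter (fun j => σ j = i)).card : ℝ)
        = m := by
      simp only [Finset.filter_filter, and_self]
      have := Finset.card_eq_sum_card_fiberwise (f := σ) (s := Finset.univ) (t := Finset.univ)
        (by intro x _; simp)
      simp only [Finset.card_univ, Fintype.card_fin] at this
      exact_mod_cast this.symm
    have h2 : ∑ i, (((A i).filter (fun j => σ j = i)).card : ℝ)
        = ((Finset.univ.filter (fun j => j ∈ A (σ j))).card : ℝ) := by
      have := Finset.card_eq_sum_card_fiberwise (f := σ)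
        (s := Finset.univ.filter (fun j => j ∈ A (σ j))) (t := Finset.univ)
        (by intro x _; simp)
      rw [this]
      push_cast
      apply Finset.sum_congr rfl
      intro i _
      congr 2
      ext j
      simp only [Finset.mem_filter, Finset.mem_univ, true_and]
      constructor
      · rintro ⟨h, rfl⟩; exact ⟨h, rfl⟩
      · rintro ⟨h, rfl⟩; exact ⟨h, rfl⟩
    rw [h1, h2] at hval
    have h3 : Real.sqrt ((k:ℝ)/m) * m = s := by
      rw [← hrs, ← mul_assoc]
      have : Real.sqrt ((k:ℝ)/m) * r = 1 := by
        rw [hr, ← Real.sqrt_mul (by positivity)]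
        rw [show (k:ℝ)/m * (m/k) = 1 by field_simp]
        exact Real.sqrt_one
      rw [hrs] at *
      rw [this, one_mul]
    rw [h3] at hval
    have h4 : q ≤ (Finset.univ.filter (fun j => j ∈ A (σ j))).card := Nat.ceil_le.mpr hval
    obtain ⟨P, hPs, hPc⟩ := Finset.exists_subset_card_eq h4
    exact ⟨P, hPc, A, hA𝒜, fun j hj => (Finset.mem_filter.mp (hPs hj)).2⟩
  choose P hPc hPA using hcov
  obtain ⟨R, hRc, hRX⟩ := aux_pigeon b P hPc hqm
  set F := (Finset.univ.filter (fun σ => P σ = R)).image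
    (fun σ j => if j ∈ R then σ j else b) with hF
  have h3m : 3 * (m:ℝ) ≤ n * q := by
    calc 3 * (m:ℝ) = (3 * r) * s := by rw [← hrs]; ring
      _ ≤ n * q := by gcongr
  have hFcard := aux_count hqpos h3m hmnat hRX
  set D : ℕ := ⌈0.003 * s / L⌉₊ with hD
  have hDle : 0.003 * s / L ≤ D := Nat.le_ceil _
  have hDlt : (D:ℝ) < 0.003 * s / L + 1 := Nat.ceil_lt_add_one (by positivity)
  by_cases hex : ∃ S : Finset (Fin m), ∃ T : Fin m → Finset (Fin n), S ⊆ R ∧ S.card = D ∧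
      (∀ j ∈ S, (T j).card = 2) ∧
      ∀ g : Fin m → Fin n, (∀ j ∈ S, g j ∈ T j) → ∃ f ∈ F, ∀ j ∈ S, f j = g j
  · obtain ⟨S, T, hSR, hSc, hT, hg⟩ := hex
    refine ⟨S, by rw [hSc]; exact hDle, T, hT, ?_⟩
    intro g hgT
    obtain ⟨f, hf, hfg⟩ := hg g hgT
    obtain ⟨σ, hσ, rfl⟩ := Finset.mem_image.mp hf
    have hσR : P σ = R := (Finset.mem_filter.mp hσ).2
    obtain ⟨A, hA𝒜, hAj⟩ := hPA σ
    refine ⟨A, hA𝒜, fun j hj => ?_⟩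
    have h1 := hfg j hj
    simp only [hSR hj, if_true] at h1
    rw [← h1]
    exact hAj j (by rw [hσR]; exact hSR hj)
  · exfalso
    set N : ℕ := n.choose 2 with hN
    have hN1 : (1:ℝ) ≤ N := by
      have : 0 < N := Nat.choose_pos (by omega)
      exact_mod_cast this
    have hNle : (N:ℝ) ≤ n ^ 2 / 2 := by
      have := Nat.choose_le_pow_div (α := ℝ) 2 n
      simpa using this
    have hnat := aux_natarajan b (40 * N) (by linarith) R D F (by
      intro f hf j hj
      obtain ⟨σ, -, rfl⟩ := Finset.mem_image.mp hf
      simp [hj]) hex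
    rw [hRc, Fintype.card_fin, ← hN] at hnat
    have hratio : (1 + (N:ℝ) / (40 * N)) = 1 + 0.025 := by
      field_simp; norm_num
    rw [hratio] at hnat
    have h1 : ((1:ℝ) + 0.025) ^ q ≤ Real.exp (0.025 * q) := by
      rw [show (0.025 : ℝ) * q = q * 0.025 by ring, Real.exp_nat_mul]
      apply pow_le_pow_left₀ (by norm_num)
      have := Real.add_one_le_exp (0.025:ℝ)
      linarith
    have hlog : Real.log (40 * N) ≤ 10 * L := by
      have hle : (40 * N : ℝ) ≤ ((m:ℝ)/k) ^ 10 := by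
        have e1 : (40 * N : ℝ) ≤ 320 * ((m:ℝ)/k) := by
          rw [← hr2]; nlinarith
        have e2 : (2:ℝ)^9 ≤ ((m:ℝ)/k)^9 := pow_le_pow_left₀ (by norm_num) hmk2 9
        rw [pow_succ]
        refine e1.trans ?_
        apply mul_le_mul_of_nonneg_right _ (by positivity)
        refine le_trans (by norm_num) e2
      have := Real.log_le_log (by linarith) hle
      rw [Real.log_pow] at this
      exact_mod_cast this
    have h2 : (40 * (N:ℝ)) ^ D ≤ Real.exp (0.06 * q) := by
      have hp : (0:ℝ) < 40 * N := by linarith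
      rw [← Real.exp_log hp, ← Real.exp_nat_mul]
      apply Real.exp_le_exp.mpr
      have e1 : (D:ℝ) * L ≤ 0.003 * s + L := by
        have : (D:ℝ) * L ≤ (0.003 * s / L + 1) * L := by gcongr
        have e : (0.003 * s / L + 1) * L = 0.003 * s + L := by
          have : L ≠ 0 := by linarith
          field_simp
        linarith
      calc (D:ℝ) * Real.log (40 * N) ≤ D * (10 * L) := by gcongr
        _ ≤ 0.06 * q := by linarith
    have h3 : Real.exp (0.09 * q) ≤ Real.exp (0.06 * q) * Real.exp (0.025 * q) := by
      refine hFcard.trans (hnat.trans ?_)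
      gcongr
    rw [← Real.exp_add] at h3
    have h4 := Real.exp_le_exp.mp h3
    have h5 : (0:ℝ) < q := by exact_mod_cast hqpos
    linarith
end

section
/- There exist universal constants c₁, c₂ > 0 such that the following holds. Let s ≥ 2, t ≥ 2 be integers with t ≤ c₁ · s/ln(s), and for each j ∈ [s] let T_j ⊆ [t] be a set of exactly two bidders. Then there exist an integer z ≥ 2^{c₂·s/t}, functions B⁽¹⁾,…,B⁽ᶻ⁾ : [s] → [t] with B⁽ˡ⁾(j) ∈ T_j for all j and ℓ, and a set V ⊆ [t] with |V| ≥ 2, such that: (a) for every bidder i ∈ [t], the cardinality |(B⁽ˡ⁾)⁻¹(i)| is the same for all ℓ ∈ [z]; and (b) for every function f : V → [z], f is constant if and only if the sets (B^{(f(i))})⁻¹(i) for i ∈ V are pairwise disjoint. -/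
open Finset in
/-- ODE comparison. -/
lemma ode_compare (h h' : ℝ → ℝ) (M : ℕ) (hd : ∀ r, 0 < r → HasDerivAt h (h' r) r)
    (h1 : 0 ≤ h 1) (hle : ∀ r, 0 < r → r ≤ 1 → r * h' r ≤ M * h r) :
    ∀ r, 0 < r → r ≤ 1 → 0 ≤ h r := by
  intro r0 hr0 hr1
  have hder : ∀ r, 0 < r → HasDerivAt (fun r => h r / r ^ M)
      ((h' r * r ^ M - h r * (M * r ^ (M - 1))) / (r ^ M) ^ 2) r := by
    intro r hr
    exact (hd r hr).div (hasDerivAt_pow M r) (by positivity)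
  have hanti : AntitoneOn (fun r => h r / r ^ M) (Set.Icc r0 1) := by
    apply antitoneOn_of_deriv_nonpos (convex_Icc r0 1)
    · intro r hr
      exact (hder r (lt_of_lt_of_le hr0 hr.1)).continuousAt.continuousWithinAt
    · intro r hr
      rw [interior_Icc] at hr
      exact (hder r (lt_trans hr0 hr.1)).differentiableAt.differentiableWithinAt
    · intro r hr
      rw [interior_Icc] at hr
      have hr' : 0 < r := lt_trans hr0 hr.1
      rw [(hder r hr').deriv]
      apply div_nonpos_of_nonpos_of_nonneg _ (by positivity)
      have e : r * ((M : ℝ) * r ^ (M - 1)) = M * r ^ M := by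
        rcases M with _ | M
        · simp
        · simp [pow_succ]; ring
      have : r * (h' r * r ^ M - h r * (M * r ^ (M - 1))) ≤ 0 := by
        have : r * (h' r * r ^ M - h r * (M * r ^ (M - 1)))
          = r ^ M * (r * h' r - M * h r) := by
          linear_combination (- h r) * e
        rw [this]
        exact mul_nonpos_of_nonneg_of_nonpos (by positivity) (by linarith [hle r hr' hr.2.le])
      by_contra hc
      push Not at hc
      nlinarith [mul_pos hr' hc]
  have := hanti (Set.left_mem_Icc.2 hr1) (Set.right_mem_Icc.2 hr1) hr1
  simp only [one_pow, div_one] at this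
  have h2 : 0 ≤ h r0 / r0 ^ M := h1.trans this
  have h3 := mul_nonneg h2 (pow_pos hr0 M).le
  rwa [div_mul_cancel₀ _ (pow_pos hr0 M).ne'] at h3

/-- number of edges bichromatic under `f` -/
def crossNum {V E C : Type} [Fintype E] [DecidableEq C] (a b : E → V) (f : V → C) : ℕ :=
  (Finset.univ.filter fun e => f (a e) ≠ f (b e)).card

open Finset in
lemma potts (C : Type) [Fintype C] [DecidableEq C] [Nonempty C] (E : Type) [Fintype E] (k : ℕ) (n : ℕ) :
    ∀ (V : Type) [Fintype V] [DecidableEq V] (a b : E → V), Fintype.card V = n + 1 →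
      (∀ g : V → Bool, (∃ v w, g v ≠ g w) → k ≤ crossNum a b g) →
      ∀ r : ℝ, 0 < r → r ≤ 1 →
        ∑ f : V → C, r ^ (2 * crossNum a b f) ≤
          (1 + ((Fintype.card C : ℝ) - 1) * r ^ k) ^ (n + 1) + (Fintype.card C - 1) := by
  have hz1 : (1 : ℝ) ≤ Fintype.card C := by exact_mod_cast Fintype.card_pos
  induction n with
  | zero =>
    intro V _ _ a b hV hcut r hr hr1
    have hsub : Subsingleton V := by
      rw [← Fintype.card_le_one_iff_subsingleton]; omega
    have : ∀ f : V → C, crossNum a b f = 0 := by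
      intro f
      simp only [crossNum, card_eq_zero, filter_eq_empty_iff]
      intro e _ h
      exact h (congrArg f (Subsingleton.elim _ _))
    simp only [this, mul_zero, pow_zero, sum_const, card_univ, Fintype.card_fun, hV, zero_add, pow_one,
      nsmul_eq_mul, mul_one]
    have : 0 ≤ ((Fintype.card C : ℝ) - 1) * r ^ k := mul_nonneg (by linarith) (by positivity)
    linarith
  | succ n ih =>
    intro V _ _ a b hV hcut
    set z : ℝ := ((Fintype.card C : ℕ) : ℝ) with hz
    set N : Finset E := univ.filter fun e => a e ≠ b e with hN
    -- degree sum
    have hdeg : (n + 2) * k ≤ 2 * N.card := by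
      have h1 : ∀ v : V, k ≤ crossNum a b (fun w => decide (w = v)) := by
        intro v
        apply hcut
        have : 1 < Fintype.card V := by omega
        obtain ⟨w, hw⟩ := Fintype.exists_ne_of_one_lt_card this v
        exact ⟨v, w, by simp [hw]⟩
      have h2 : ∑ v : V, crossNum a b (fun w => decide (w = v)) = 2 * N.card := by
        simp only [crossNum, card_filter]
        rw [sum_comm, hN, card_filter, mul_sum]
        apply sum_congr rfl
        intro e _
        by_cases hab : a e = b e
        · simp [hab]
        · rw [← card_filter]
          have : (univ.filter fun v => decide (a e = v) ≠ decide (b e = v)) = {a e, b e} := by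
            ext v
            simp only [mem_filter, mem_univ, true_and, mem_insert, mem_singleton]
            by_cases h1 : a e = v
            · subst h1; simp [Ne.symm hab]
            · by_cases h2 : b e = v
              · subst h2; simp [hab]
              · simp [h1, h2, Ne.symm h1, Ne.symm h2]
          rw [this, card_pair hab]; simp [hab]
      calc (n + 2) * k = ∑ v : V, k := by simp [hV]
        _ ≤ _ := sum_le_sum fun v _ => h1 v
        _ = _ := h2
    -- contraction
    have hcon : ∀ r : ℝ, 0 < r → r ≤ 1 → ∀ e ∈ N,
        ∑ f : V → C with f (a e) = f (b e), r ^ (2 * crossNum a b f) ≤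
          (1 + (z - 1) * r ^ k) ^ (n + 1) + (z - 1) := by
      intro r hr hr1 e he
      have hab : a e ≠ b e := by simpa [hN] using he
      let π : V → {v : V // v ≠ b e} := fun v => if h : v = b e then ⟨a e, hab⟩ else ⟨v, h⟩
      have hπ : ∀ v : {v : V // v ≠ b e}, π v = v := by
        intro v; simp [π, v.2]
      have hcard : Fintype.card {v : V // v ≠ b e} = n + 1 := by
        have := Fintype.card_subtype_compl (fun v => v = b e)
        rw [Fintype.card_subtype_compl]; simp [hV]
      have hcc : ∀ {D : Type} [DecidableEq D] (g : {v : V // v ≠ b e} → D),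
          crossNum (π ∘ a) (π ∘ b) g = crossNum a b (g ∘ π) := by
        intro D _ g; rfl
      have := ih {v : V // v ≠ b e} (π ∘ a) (π ∘ b) hcard (by
        intro g ⟨v, w, hvw⟩
        rw [hcc]
        apply hcut
        exact ⟨v, w, by simpa [hπ] using hvw⟩) r hr hr1
      refine le_trans (le_of_eq ?_) this
      refine sum_nbij' (fun f v => f v.1) (fun g => g ∘ π) ?_ ?_ ?_ ?_ ?_
      · simp
      · intro g _
        simp [π, hab]
      · intro f hf
        have hf : f (a e) = f (b e) := by simpa using hf
        funext v
        by_cases h : v = b e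
        · simp [π, h, hf]
        · simp [π, h]
      · intro g _
        funext v
        simp [hπ]
      · intro f hf
        have hf : f (a e) = f (b e) := by simpa using hf
        rw [hcc]
        congr 3
        funext v
        by_cases h : v = b e
        · simp [π, h, hf]
        · simp [π, h]
    -- identity
    have hid : ∀ r : ℝ, 0 < r → r ≤ 1 →
        ∑ f : V → C, ((N.card : ℝ) - crossNum a b f) * r ^ (2 * crossNum a b f) ≤
          N.card * ((1 + (z - 1) * r ^ k) ^ (n + 1) + (z - 1)) := by
      intro r hr hr1
      have h1 : ∀ f : V → C, (N.card : ℝ) - crossNum a b f =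
          ∑ e ∈ N, if f (a e) = f (b e) then (1 : ℝ) else 0 := by
        intro f
        have : crossNum a b f = (N.filter fun e => ¬ f (a e) = f (b e)).card := by
          unfold crossNum
          congr 1
          ext e
          simp only [hN, mem_filter, mem_univ, true_and]
          constructor
          · intro h
            exact ⟨fun h' => h (congrArg f h'), h⟩
          · exact fun h => h.2
        rw [this, ← card_filter_add_card_filter_not (s := N) (fun e => f (a e) = f (b e))]
        rw [sum_boole]
        push_cast
        ring
      simp only [h1, sum_mul]
      rw [sum_comm]
      calc _ ≤ ∑ e ∈ N, ((1 + (z - 1) * r ^ k) ^ (n + 1) + (z - 1)) := by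
            apply sum_le_sum
            intro e he
            refine le_trans (le_of_eq ?_) (hcon r hr hr1 e he)
            rw [sum_filter]
            apply sum_congr rfl
            intro f _
            split_ifs <;> simp
        _ = _ := by simp; ring
    have key := ode_compare
      (fun r => (1 + (z - 1) * r ^ k) ^ (n + 2) + (z - 1) - ∑ f : V → C, r ^ (2 * crossNum a b f))
      (fun r => ((n + 2 : ℕ) : ℝ) * (1 + (z - 1) * r ^ k) ^ (n + 2 - 1) * ((z - 1) * (k * r ^ (k - 1)))
        - ∑ f : V → C, ((2 * crossNum a b f : ℕ) : ℝ) * r ^ (2 * crossNum a b f - 1))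
      (2 * N.card) ?_ ?_ ?_
    · intro r hr hr1
      have := key r hr hr1
      linarith
    · intro r hr
      apply HasDerivAt.sub
      · apply HasDerivAt.add_const
        apply HasDerivAt.pow
        apply HasDerivAt.const_add
        apply HasDerivAt.const_mul
        exact hasDerivAt_pow k r
      · apply HasDerivAt.fun_sum
        intro f _
        exact hasDerivAt_pow _ r
    · simp only [one_pow, mul_one, sum_const, card_univ, Fintype.card_fun, hV, nsmul_eq_mul]
      push_cast
      rw [← hz]
      have : 1 + (z - 1) = z := by ring
      rw [this]
      have : n + 1 + 1 = n + 2 := rfl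
      rw [this]
      linarith
    · intro r hr hr1
      have hpow : ∀ j : ℕ, r * ((j : ℝ) * r ^ (j - 1)) = j * r ^ j := by
        intro j
        rcases j with _ | j
        · simp
        · simp [pow_succ]; ring
      have hI := hid r hr hr1
      have hs : r * ∑ f : V → C, ((2 * crossNum a b f : ℕ) : ℝ) * r ^ (2 * crossNum a b f - 1)
          = 2 * ∑ f : V → C, (crossNum a b f : ℝ) * r ^ (2 * crossNum a b f) := by
        rw [mul_sum, mul_sum]
        apply sum_congr rfl
        intro f _
        rw [hpow]; push_cast; ring
      have hI2 : ∑ f : V → C, ((N.card : ℝ) - crossNum a b f) * r ^ (2 * crossNum a b f)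
          = N.card * (∑ f : V → C, r ^ (2 * crossNum a b f))
            - ∑ f : V → C, (crossNum a b f : ℝ) * r ^ (2 * crossNum a b f) := by
        simp only [sub_mul, sum_sub_distrib, ← mul_sum]
      rw [hI2] at hI
      rw [mul_sub, hs]
      set X := r ^ k with hX
      have hX0 : 0 ≤ X := by positivity
      have hkk := hpow k
      rw [← hX] at hkk
      set P := (1 + (z - 1) * X) ^ (n + 1) with hP
      have hP0 : 0 ≤ P := by
        have : 0 ≤ (z - 1) * X := mul_nonneg (by linarith) hX0
        positivity
      have hP1 : (1 + (z - 1) * X) ^ (n + 2 - 1) = P := rfl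
      have hP2 : (1 + (z - 1) * X) ^ (n + 2) = P * (1 + (z - 1) * X) := rfl
      rw [hP1, hP2]
      have hdeg' : ((n + 2 : ℕ) : ℝ) * k ≤ 2 * N.card := by exact_mod_cast hdeg
      have e1 : r * (((n + 2 : ℕ) : ℝ) * P * ((z - 1) * (k * r ^ (k - 1))))
          = (((n + 2 : ℕ) : ℝ) * k) * (P * ((z - 1) * X)) := by
        linear_combination (((n + 2 : ℕ) : ℝ) * P * (z - 1)) * hkk
      rw [e1]
      have hnn : 0 ≤ P * ((z - 1) * X) := mul_nonneg hP0 (mul_nonneg (by linarith) hX0)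
      have := mul_le_mul_of_nonneg_right hdeg' hnn
      push_cast at this ⊢
      nlinarith [this, hI]

open Finset in
/-- Hall / Hakimi: orientation with prescribed in-degrees. -/
lemma hakimi {V E : Type} [Fintype V] [DecidableEq V] [Fintype E] [DecidableEq E]
    (o : E → V) (A : E → Finset V)
    (h : ∀ S : Finset V, (univ.filter fun e => A e ⊆ S).card ≤ (univ.filter fun e => o e ∈ S).card) :
    ∃ B : E → V, (∀ e, B e ∈ A e) ∧
      ∀ v, (univ.filter fun e => B e = v).card = (univ.filter fun e => o e = v).card := by
  -- slots are the edges themselves; an edge x is a slot of the vertex o x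
  have hall := (Finset.all_card_le_biUnion_card_iff_exists_injective
    (fun e : E => univ.filter fun e' => o e' ∈ A e)).1 (by
      intro s
      calc s.card ≤ (univ.filter fun e => A e ⊆ s.biUnion A).card := by
            apply card_le_card
            intro e he
            simp only [mem_filter, mem_univ, true_and]
            exact subset_biUnion_of_mem A he
        _ ≤ _ := h _
        _ ≤ _ := by
            apply card_le_card
            intro e he
            simpa using he)
  obtain ⟨g, hg, hgA⟩ := hall
  have hbij : Function.Bijective g := Finite.injective_iff_bijective.1 hg
  refine ⟨fun e => o (g e), fun e => by simpa using hgA e, fun v => ?_⟩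
  apply card_bij (fun e _ => g e)
  · intro e he; simpa using he
  · intro e _ e' _ hh; exact hg hh
  · intro e' he'
    obtain ⟨e, rfl⟩ := hbij.2 e'
    exact ⟨e, by simpa using he', rfl⟩

open Finset in
lemma marg_one {L : Type} [Fintype L] [DecidableEq L] (l : L) (c : Fin 4) :
    ∑ α : L → Fin 4, (if α l = c then (2 : ℝ) else 1) = 4 ^ Fintype.card L * (5 / 4) := by
  have h := Finset.prod_univ_sum (fun _ : L => (univ : Finset (Fin 4)))
    (fun i x => if i = l then (if x = c then (2 : ℝ) else 1) else 1)
  rw [Fintype.piFinset_univ] at h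
  have e1 : ∀ α : L → Fin 4, ∏ i, (if i = l then (if α i = c then (2 : ℝ) else 1) else 1)
      = if α l = c then (2 : ℝ) else 1 := by
    intro α; rw [prod_ite_eq']; simp
  simp only [e1] at h
  rw [← h]
  have e2 : ∀ i : L, ∑ x : Fin 4, (if i = l then (if x = c then (2 : ℝ) else 1) else 1)
      = 4 * (if i = l then 5 / 4 else 1) := by
    intro i
    split_ifs
    · fin_cases c <;> simp [Fin.sum_univ_four] <;> norm_num
    · simp
  simp only [e2, prod_mul_distrib, prod_const, prod_ite_eq']
  simp

open Finset in
lemma marg_two {L : Type} [Fintype L] [DecidableEq L] (l l' : L) (hl : l ≠ l') (c c' : Fin 4) :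
    ∑ α : L → Fin 4, (if α l = c ∧ α l' = c' then (0 : ℝ) else 1)
      = 4 ^ Fintype.card L * (15 / 16) := by
  have h := Finset.prod_univ_sum (fun _ : L => (univ : Finset (Fin 4)))
    (fun i x => (if i = l then (if x = c then (1 : ℝ) else 0) else 1) *
      (if i = l' then (if x = c' then (1 : ℝ) else 0) else 1))
  rw [Fintype.piFinset_univ] at h
  have e1 : ∀ α : L → Fin 4, ∏ i, ((if i = l then (if α i = c then (1 : ℝ) else 0) else 1) *
      (if i = l' then (if α i = c' then (1 : ℝ) else 0) else 1))
      = 1 - if α l = c ∧ α l' = c' then (0 : ℝ) else 1 := by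
    intro α
    rw [prod_mul_distrib, prod_ite_eq', prod_ite_eq']
    by_cases h1 : α l = c <;> by_cases h2 : α l' = c' <;> simp [h1, h2]
  simp only [e1] at h
  have e2 : ∀ i : L, ∑ x : Fin 4, ((if i = l then (if x = c then (1 : ℝ) else 0) else 1) *
      (if i = l' then (if x = c' then (1 : ℝ) else 0) else 1))
      = 4 * ((if i = l then 1 / 4 else 1) * (if i = l' then 1 / 4 else 1)) := by
    intro i
    by_cases h1 : i = l
    · subst h1
      simp [hl]
    · by_cases h2 : i = l'
      · simp [h2, hl.symm]
      · simp [h1, h2]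
  simp only [e2, prod_mul_distrib, prod_const, prod_ite_eq', sum_sub_distrib] at h
  simp at h
  linarith

/-- allowed endpoints of an edge in a given state -/
def allowed {V : Type} [DecidableEq V] (u v : V) (c : Fin 4) : Finset V :=
  if c = 0 then {u} else if c = 1 then {v} else {u, v}

open Finset in
lemma edge_one {V L : Type} [DecidableEq V] [Fintype L] [DecidableEq L] (l : L) (u v : V)
    (g : V → Bool) :
    ∑ x : Bool × (L → Fin 4),
      (if (∀ w ∈ allowed u v (x.2 l), g w = true) then (2 : ℝ) else 1) *
        (if g (if x.1 then u else v) = true then 1 / 2 else 1)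
      = (2 * 4 ^ Fintype.card L) * (if g u ≠ g v then 15 / 16 else 1) := by
  rw [Fintype.sum_prod_type, Fintype.sum_bool]
  simp only [if_true, Bool.false_eq_true, if_false, ← sum_mul]
  have hc : ∀ c : Fin 4, (∀ w ∈ allowed u v c, g w = true) ↔
      (if g u = true then (if g v = true then True else c = 0) else
        (if g v = true then c = 1 else False)) := by
    intro c
    fin_cases c <;> cases hu : g u <;> cases hv : g v <;> simp [allowed, hu, hv]
  simp only [hc]
  cases hu : g u <;> cases hv : g v <;> simp [marg_one] <;> ring

open Finset in
lemma edge_two {L : Type} [Fintype L] [DecidableEq L] (l l' : L) :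
    ∑ x : Bool × (L → Fin 4),
      (if (x.2 l = 0 ∧ x.2 l' = 1) then (0 : ℝ) else 1)
      = (2 * 4 ^ Fintype.card L) * (if l ≠ l' then 15 / 16 else 1) := by
  rw [Fintype.sum_prod_type, Fintype.sum_bool]
  by_cases h : l = l'
  · subst h
    have : ∀ α : L → Fin 4, ¬ (α l = 0 ∧ α l = 1) := by
      rintro α ⟨h1, h2⟩
      rw [h1] at h2
      exact absurd h2 (by decide)
    simp [this]
    ring
  · simp only [marg_two l l' h, h, ne_eq, not_false_eq_true, if_true]
    ring

open Finset in
lemma potts_nc (C : Type) [Fintype C] [DecidableEq C] [Nonempty C] (E : Type) [Fintype E] (k : ℕ)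
    (V : Type) [Fintype V] [DecidableEq V] [Nonempty V] (a b : E → V)
    (hcut : ∀ g : V → Bool, (∃ v w, g v ≠ g w) → k ≤ crossNum a b g)
    (r : ℝ) (hr : 0 < r) (hr1 : r ≤ 1) :
    ∑ f : V → C with ∃ v w, f v ≠ f w, (r ^ 2) ^ (crossNum a b f) ≤
      (1 + ((Fintype.card C : ℝ) - 1) * r ^ k) ^ (Fintype.card V) - 1 := by
  obtain ⟨n, hn⟩ : ∃ n, Fintype.card V = n + 1 :=
    ⟨Fintype.card V - 1, by have := Fintype.card_pos (α := V); omega⟩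
  have h := potts C E k n V a b hn hcut r hr hr1
  rw [← hn] at h
  simp only [pow_mul] at h
  rw [← sum_filter_add_sum_filter_not univ (fun f : V → C => ∃ v w, f v ≠ f w)] at h
  have h2 : (Fintype.card C : ℝ) ≤
      ∑ f : V → C with ¬ ∃ v w, f v ≠ f w, (r ^ 2) ^ (crossNum a b f) := by
    have e1 : ∑ f : V → C with ¬ ∃ v w, f v ≠ f w, (r ^ 2) ^ (crossNum a b f)
        = ∑ f : V → C with ¬ ∃ v w, f v ≠ f w, (1 : ℝ) := by
      apply sum_congr rfl
      intro f hf
      simp only [mem_filter, mem_univ, true_and, not_exists, not_not] at hf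
      have : crossNum a b f = 0 := by
        simp only [crossNum, card_eq_zero, filter_eq_empty_iff]
        intro e _ h
        exact h (hf _ _)
      simp [this]
    rw [e1, sum_const, nsmul_eq_mul, mul_one]
    have : Fintype.card C ≤ (univ.filter fun f : V → C => ¬ ∃ v w, f v ≠ f w).card := by
      rw [← card_univ]
      apply card_le_card_of_injOn (fun c _ => c)
      · intro c _; simp
      · intro c _ c' _ hh
        exact congrFun hh (Classical.arbitrary V)
    exact_mod_cast this
  linarith

lemma pow_bound (n : ℕ) (y : ℝ) (hy : 0 ≤ y) (hny : n * y ≤ 1) : (1 + y) ^ n - 1 ≤ 2 * (n * y) := by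
  have h1 : (1 + y) ^ n ≤ Real.exp (n * y) := by
    rw [Real.exp_nat_mul]
    apply pow_le_pow_left₀ (by linarith)
    linarith [Real.add_one_le_exp y]
  have h2 := Real.abs_exp_sub_one_le (x := n * y) (by
    rw [abs_of_nonneg (by positivity)]; exact hny)
  rw [abs_of_nonneg (a := (n : ℝ) * y) (by positivity)] at h2
  linarith [le_abs_self (Real.exp (n * y) - 1)]

open Finset in
lemma prod_weight {V E L : Type} [Fintype E] [DecidableEq E] [Fintype L] [DecidableEq L]
    {C : Type} [DecidableEq C]
    (a b : E → V) (f : V → C) (w : E → Bool × (L → Fin 4) → ℝ)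
    (hw : ∀ e, ∑ x, w e x = (2 * 4 ^ Fintype.card L) * (if f (a e) ≠ f (b e) then 15 / 16 else 1)) :
    ∑ ω : E → Bool × (L → Fin 4), ∏ e, w e (ω e)
      = (2 * 4 ^ Fintype.card L : ℝ) ^ Fintype.card E * (15 / 16) ^ (crossNum a b f) := by
  have h := Finset.prod_univ_sum (fun _ : E => (univ : Finset (Bool × (L → Fin 4)))) w
  rw [Fintype.piFinset_univ] at h
  rw [← h]
  simp only [hw]
  rw [prod_mul_distrib, prod_const, card_univ]
  congr 1
  rw [prod_ite]
  simp [crossNum, div_pow]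

set_option maxHeartbeats 1000000 in
open Finset in
lemma core {V E L : Type} [Fintype V] [DecidableEq V] [Nonempty V] [Fintype E] [DecidableEq E]
    [Fintype L] [DecidableEq L] [Nonempty L] (a b : E → V) (k : ℕ)
    (hcut : ∀ g : V → Bool, (∃ v w, g v ≠ g w) → k ≤ crossNum a b g)
    (r : ℝ) (hr : 0 < r) (hr2 : r ^ 2 = 15 / 16)
    (hsmall : 4 * ((Fintype.card V : ℝ) * (Fintype.card L * r ^ k)) < 1) :
    ∃ B : L → E → V, (∀ l e, B l e = a e ∨ B l e = b e) ∧
      (∀ v l l', (univ.filter fun e => B l e = v).card = (univ.filter fun e => B l' e = v).card) ∧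
      ∀ f : V → L, (∃ v w, f v ≠ f w) →
        ∃ e, a e ≠ b e ∧ B (f (a e)) e = a e ∧ B (f (b e)) e = b e := by
  have hr1 : r ≤ 1 := by nlinarith
  have hgood : ∃ ω : E → Bool × (L → Fin 4),
      (∀ l : L, ∀ g : V → Bool, (∃ v w, g v ≠ g w) →
        (univ.filter fun e => ∀ w ∈ allowed (a e) (b e) ((ω e).2 l), g w = true).card ≤
        (univ.filter fun e => g (if (ω e).1 then a e else b e) = true).card) ∧
      (∀ f : V → L, (∃ v w, f v ≠ f w) → ∃ e, (ω e).2 (f (a e)) = 0 ∧ (ω e).2 (f (b e)) = 1) := by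
    by_contra hcon
    push Not at hcon
    set w1 : L → (V → Bool) → E → Bool × (L → Fin 4) → ℝ := fun l g e x =>
      (if (∀ w ∈ allowed (a e) (b e) (x.2 l), g w = true) then (2 : ℝ) else 1) *
        (if g (if x.1 then a e else b e) = true then 1 / 2 else 1) with hw1
    set w2 : (V → L) → E → Bool × (L → Fin 4) → ℝ := fun f e x =>
      (if (x.2 (f (a e)) = 0 ∧ x.2 (f (b e)) = 1) then (0 : ℝ) else 1) with hw2
    have p1 : ∀ l g (ω : E → Bool × (L → Fin 4)), 0 ≤ ∏ e, w1 l g e (ω e) := by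
      intro l g ω
      apply prod_nonneg
      intro e _
      simp only [hw1]
      apply mul_nonneg <;> split_ifs <;> norm_num
    have p2 : ∀ f (ω : E → Bool × (L → Fin 4)), 0 ≤ ∏ e, w2 f e (ω e) := by
      intro f ω
      apply prod_nonneg
      intro e _
      simp only [hw2]
      split_ifs <;> norm_num
    have hbad : ∀ ω : E → Bool × (L → Fin 4), (1 : ℝ) ≤
        (∑ l : L, ∑ g : V → Bool with ∃ v w, g v ≠ g w, ∏ e, w1 l g e (ω e)) +
          ∑ f : V → L with ∃ v w, f v ≠ f w, ∏ e, w2 f e (ω e) := by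
      intro ω
      by_cases h1 : ∀ l : L, ∀ g : V → Bool, (∃ v w, g v ≠ g w) →
        (univ.filter fun e => ∀ w ∈ allowed (a e) (b e) ((ω e).2 l), g w = true).card ≤
        (univ.filter fun e => g (if (ω e).1 then a e else b e) = true).card
      · obtain ⟨f, hf, hfe⟩ := hcon ω h1
        have : (1 : ℝ) = ∏ e, w2 f e (ω e) := by
          symm
          apply prod_eq_one
          intro e _
          simp only [hw2]
          rw [if_neg]
          rintro ⟨h3, h4⟩
          exact hfe e h3 h4
        have h5 : ∏ e, w2 f e (ω e) ≤ ∑ f : V → L with ∃ v w, f v ≠ f w, ∏ e, w2 f e (ω e) :=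
          single_le_sum (f := fun f => ∏ e, w2 f e (ω e)) (fun f _ => p2 f ω)
            (by simpa using hf)
        have h6 : 0 ≤ ∑ l : L, ∑ g : V → Bool with ∃ v w, g v ≠ g w, ∏ e, w1 l g e (ω e) :=
          sum_nonneg fun l _ => sum_nonneg fun g _ => p1 l g ω
        linarith
      · push Not at h1
        obtain ⟨l, g, hg, hlt⟩ := h1
        have h2 : (1 : ℝ) ≤ ∏ e, w1 l g e (ω e) := by
          simp only [hw1, prod_mul_distrib]
          rw [prod_ite, prod_ite]
          simp only [prod_const, one_pow, mul_one]
          set p := (univ.filter fun e => ∀ w ∈ allowed (a e) (b e) ((ω e).2 l), g w = true).card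
          set q := (univ.filter fun e => g (if (ω e).1 then a e else b e) = true).card
          calc (1 : ℝ) = 2 ^ q * (1 / 2) ^ q := by rw [← mul_pow]; norm_num
            _ ≤ 2 ^ p * (1 / 2) ^ q := by
              gcongr
              norm_num
        have h5 : ∏ e, w1 l g e (ω e) ≤ ∑ g : V → Bool with ∃ v w, g v ≠ g w, ∏ e, w1 l g e (ω e) :=
          single_le_sum (f := fun g => ∏ e, w1 l g e (ω e)) (fun g _ => p1 l g ω)
            (by simpa using hg)
        have h7 : ∑ g : V → Bool with ∃ v w, g v ≠ g w, ∏ e, w1 l g e (ω e) ≤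
            ∑ l : L, ∑ g : V → Bool with ∃ v w, g v ≠ g w, ∏ e, w1 l g e (ω e) :=
          single_le_sum (f := fun l => ∑ g : V → Bool with ∃ v w, g v ≠ g w, ∏ e, w1 l g e (ω e))
            (fun l _ => sum_nonneg fun g _ => p1 l g ω) (mem_univ l)
        have h6 : 0 ≤ ∑ f : V → L with ∃ v w, f v ≠ f w, ∏ e, w2 f e (ω e) :=
          sum_nonneg fun f _ => p2 f ω
        linarith
    have hsum := sum_le_sum (s := univ) fun ω _ => hbad ω
    rw [sum_add_distrib, sum_comm] at hsum
    have s1 : ∀ l : L, ∑ ω : E → Bool × (L → Fin 4),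
        ∑ g : V → Bool with ∃ v w, g v ≠ g w, ∏ e, w1 l g e (ω e)
        = (2 * 4 ^ Fintype.card L : ℝ) ^ Fintype.card E *
          ∑ g : V → Bool with ∃ v w, g v ≠ g w, (r ^ 2) ^ (crossNum a b g) := by
      intro l
      rw [sum_comm, mul_sum]
      apply sum_congr rfl
      intro g _
      rw [hr2]
      exact prod_weight a b g (w1 l g) fun e => by
        rw [← edge_one l (a e) (b e) g]
        apply sum_congr rfl
        intro x _
        simp only [hw1]
        congr
    have s2 : ∑ ω : E → Bool × (L → Fin 4),
        ∑ f : V → L with ∃ v w, f v ≠ f w, ∏ e, w2 f e (ω e)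
        = (2 * 4 ^ Fintype.card L : ℝ) ^ Fintype.card E *
          ∑ f : V → L with ∃ v w, f v ≠ f w, (r ^ 2) ^ (crossNum a b f) := by
      rw [sum_comm, mul_sum]
      apply sum_congr rfl
      intro f _
      rw [hr2]
      exact prod_weight a b f (w2 f) fun e => edge_two (f (a e)) (f (b e))
    simp only [s1, s2, sum_const, card_univ, nsmul_eq_mul, mul_one, Fintype.card_fun,
      Fintype.card_prod, Fintype.card_bool, Fintype.card_fin] at hsum
    push_cast at hsum
    have b1 := potts_nc Bool E k V a b hcut r hr hr1
    have b2 := potts_nc L E k V a b hcut r hr hr1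
    have hL : (1 : ℝ) ≤ Fintype.card L := by exact_mod_cast Fintype.card_pos
    have hx : 0 < r ^ k := by positivity
    set x := r ^ k
    set n := Fintype.card V
    set z : ℝ := ((Fintype.card L : ℕ) : ℝ)
    have hzx : x ≤ z * x := by nlinarith
    have hn0 : (0 : ℝ) ≤ n := by positivity
    have hnzx : (n : ℝ) * x ≤ n * (z * x) := mul_le_mul_of_nonneg_left hzx hn0
    have hnzx' : (n : ℝ) * ((z - 1) * x) ≤ n * (z * x) :=
      mul_le_mul_of_nonneg_left (by nlinarith) hn0
    have c1 := pow_bound n x hx.le (by linarith)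
    have c2 := pow_bound n ((z - 1) * x) (mul_nonneg (by linarith) hx.le) (by linarith)
    have e3 : (1 : ℝ) + (((Fintype.card Bool : ℕ) : ℝ) - 1) * x = 1 + x := by simp; norm_num
    rw [e3] at b1
    set X1 := ∑ g : V → Bool with ∃ v w, g v ≠ g w, (r ^ 2) ^ (crossNum a b g)
    set X2 := ∑ f : V → L with ∃ v w, f v ≠ f w, (r ^ 2) ^ (crossNum a b f)
    have hK : (0 : ℝ) < (2 * 4 ^ Fintype.card L : ℝ) ^ Fintype.card E := by positivity
    set K := (2 * 4 ^ Fintype.card L : ℝ) ^ Fintype.card E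
    have d1 : z * X1 ≤ z * (2 * (n * x)) := mul_le_mul_of_nonneg_left (by linarith) (by linarith)
    have d2 : X2 ≤ 2 * (n * (z * x)) := by linarith
    have d3 : z * X1 + X2 < 1 := by nlinarith
    nlinarith
  obtain ⟨ω, hg1, hg2⟩ := hgood
  have hB : ∀ l, ∃ B : E → V, (∀ e, B e ∈ allowed (a e) (b e) ((ω e).2 l)) ∧
      ∀ v, (univ.filter fun e => B e = v).card =
        (univ.filter fun e => (if (ω e).1 then a e else b e) = v).card := by
    intro l
    apply hakimi
    intro S
    by_cases hS : ∃ v w : V, decide (v ∈ S) ≠ decide (w ∈ S)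
    · have := hg1 l (fun v => decide (v ∈ S)) hS
      simpa [subset_iff] using this
    · push Not at hS
      by_cases hne : ∃ v, v ∈ S
      · obtain ⟨v, hv⟩ := hne
        have hall : ∀ w, w ∈ S := by
          intro w
          have := hS v w
          simpa [hv] using this
        apply card_le_card
        intro e _
        simp [hall]
      · push Not at hne
        have : (univ.filter fun e => allowed (a e) (b e) ((ω e).2 l) ⊆ S) = ∅ := by
          rw [filter_eq_empty_iff]
          intro e _ h
          have h0 : (allowed (a e) (b e) ((ω e).2 l)).Nonempty := by
            unfold allowed; split_ifs <;> simp
          obtain ⟨w, hw⟩ := h0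
          exact hne w (h hw)
        rw [this]; simp
  choose B hBA hBd using hB
  refine ⟨B, ?_, ?_, ?_⟩
  · intro l e
    have := hBA l e
    unfold allowed at this
    split_ifs at this <;> simp at this <;> tauto
  · intro v l l'
    rw [hBd, hBd]
  · intro f hf
    obtain ⟨e, h0, h1⟩ := hg2 f hf
    refine ⟨e, ?_, ?_, ?_⟩
    · intro h
      rw [h, h1] at h0
      exact absurd h0 (by decide)
    · have := hBA (f (a e)) e
      rw [h0] at this
      simpa [allowed] using this
    · have := hBA (f (b e)) e
      rw [h1] at this
      simpa [allowed] using this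

open Finset in
/-- A dense multigraph has a highly edge-connected induced subgraph. -/
lemma dense_sub {s t : ℕ} (T : Fin s → Finset (Fin t)) (hT : ∀ j, (T j).card = 2)
    (a b : Fin s → Fin t) (hab : ∀ j, T j = {a j, b j}) (k0 : ℕ)
    (ht : 1 ≤ t) (hk : k0 * (t - 1) < s) :
    ∃ V : Finset (Fin t), 2 ≤ V.card ∧
      ∀ g : Fin t → Bool, (∃ v ∈ V, ∃ w ∈ V, g v ≠ g w) →
        k0 + 1 ≤ (univ.filter fun j => T j ⊆ V ∧ g (a j) ≠ g (b j)).card := by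
  let e : Finset (Fin t) → ℕ := fun V => (univ.filter fun j => T j ⊆ V).card
  let F : Finset (Finset (Fin t)) := univ.filter fun V => V.Nonempty ∧ k0 * (V.card - 1) < e V
  have hF : F.Nonempty := by
    refine ⟨univ, ?_⟩
    simp only [F, mem_filter, mem_univ, true_and]
    refine ⟨⟨⟨0, ht⟩, mem_univ _⟩, ?_⟩
    simpa [e] using hk
  obtain ⟨V, hVF, hmin⟩ := exists_min_image F card hF
  simp only [F, mem_filter, mem_univ, true_and] at hVF hmin
  obtain ⟨hVne, hV⟩ := hVF
  refine ⟨V, ?_, ?_⟩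
  · by_contra hlt
    have h1 : V.card = 1 := by have := hVne.card_pos; omega
    have : e V = 0 := by
      simp only [e, card_eq_zero, filter_eq_empty_iff]
      intro j _ hj
      have := card_le_card hj
      rw [hT, h1] at this
      omega
    omega
  · intro g ⟨v, hv, w, hw, hvw⟩
    set S1 := V.filter fun x => g x = g v with hS1
    set S2 := V.filter fun x => ¬ g x = g v with hS2
    have hc : S1.card + S2.card = V.card := card_filter_add_card_filter_not _
    have n1 : S1.Nonempty := ⟨v, by simp [hS1, hv]⟩
    have n2 : S2.Nonempty := ⟨w, by simp [hS2, hw, hvw.symm]⟩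
    have q1 := n1.card_pos
    have q2 := n2.card_pos
    have e1 : e S1 ≤ k0 * (S1.card - 1) := by
      by_contra h
      have := hmin S1 ⟨n1, by omega⟩
      omega
    have e2 : e S2 ≤ k0 * (S2.card - 1) := by
      by_contra h
      have := hmin S2 ⟨n2, by omega⟩
      omega
    have hsub : e V ≤ e S1 + e S2 +
        (univ.filter fun j => T j ⊆ V ∧ g (a j) ≠ g (b j)).card := by
      simp only [e]
      refine le_trans ?_ ((card_union_le _ _).trans (Nat.add_le_add_right (card_union_le _ _) _))
      apply card_le_card
      intro j hj
      simp only [mem_filter, mem_univ, true_and, mem_union, hab, insert_subset_iff,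
        singleton_subset_iff, hS1, hS2] at hj ⊢
      by_cases h1 : g (a j) = g v <;> by_cases h2 : g (b j) = g v <;>
        simp only [hj, h1, h2, true_and, and_true, not_true, not_false_eq_true, ne_eq, true_or, or_true,
          and_self, false_and, false_or]
      exact fun h => h2 h.symm
    have : k0 * (V.card - 1) = k0 * (S1.card - 1) + k0 * (S2.card - 1) + k0 := by
      have : V.card - 1 = (S1.card - 1) + (S2.card - 1) + 1 := by omega
      rw [this]; ring
    omega

open Finset in
lemma numeric (s t k n : ℕ) (hs : 2 ≤ s) (ht : 2 ≤ t)
    (hst : (t : ℝ) ≤ (1 / 256) * s / Real.log s) (hk : (s : ℝ) / t ≤ k) (hn : n ≤ t)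
    (r : ℝ) (hr : 0 < r) (hr2 : r ^ 2 = 15 / 16) :
    4 * ((n : ℝ) * ((⌈(2 : ℝ) ^ ((1 / 256) * (s : ℝ) / (t : ℝ))⌉₊ : ℕ) * r ^ k)) < 1 := by
  have hs' : (2 : ℝ) ≤ s := by exact_mod_cast hs
  have ht' : (2 : ℝ) ≤ t := by exact_mod_cast ht
  have hlog2 : 0 < Real.log 2 := Real.log_pos (by norm_num)
  have hlog2' : Real.log 2 ≤ 1 := by linarith [Real.log_two_lt_d9]
  have hlog : Real.log 2 ≤ Real.log s := Real.log_le_log (by norm_num) hs'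
  have hlogpos : 0 < Real.log s := by linarith
  have h1 : (t : ℝ) * Real.log s ≤ (1 / 256) * s := by
    rwa [le_div_iff₀ hlogpos] at hst
  have hlk : Real.log s ≤ (1 / 256) * k := by
    have : Real.log s ≤ (1 / 256) * ((s : ℝ) / t) := by
      rw [← mul_div_assoc, le_div_iff₀ (by linarith)]
      linarith
    linarith
  have hts : (t : ℝ) ≤ s := by
    have hq : t ≤ s := by
      by_contra hc
      push Not at hc
      have hc' : (s : ℝ) ≤ t := by exact_mod_cast hc.le
      have := Real.log_two_gt_d9
      nlinarith
    exact_mod_cast hq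
  have hns : (n : ℝ) ≤ Real.exp ((1 / 256) * k) := by
    calc (n : ℝ) ≤ t := by exact_mod_cast hn
      _ ≤ s := hts
      _ = Real.exp (Real.log s) := (Real.exp_log (by linarith)).symm
      _ ≤ _ := Real.exp_le_exp.2 hlk
  have hz : ((⌈(2 : ℝ) ^ ((1 / 256) * (s : ℝ) / (t : ℝ))⌉₊ : ℕ) : ℝ) ≤ 2 * Real.exp ((1 / 256) * k) := by
    have h2 := (Nat.ceil_lt_add_one (a := (2 : ℝ) ^ ((1 / 256) * (s : ℝ) / (t : ℝ)))
      (by positivity)).le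
    have h3 : (2 : ℝ) ^ ((1 / 256) * (s : ℝ) / (t : ℝ)) ≤ Real.exp ((1 / 256) * k) := by
      rw [Real.rpow_def_of_pos (by norm_num)]
      apply Real.exp_le_exp.2
      have h4 : (1 / 256) * (s : ℝ) / (t : ℝ) ≤ (1 / 256) * k := by
        rw [mul_div_assoc]; linarith
      have h5 : 0 ≤ (1 / 256) * (s : ℝ) / (t : ℝ) := by positivity
      nlinarith
    have h6 : 1 ≤ Real.exp ((1 / 256) * (k : ℝ)) := Real.one_le_exp (by positivity)
    linarith
  have hrk : r ^ k ≤ Real.exp (-(1 / 32) * k) := by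
    have h7 : r ≤ Real.exp (-(1 / 32)) := by
      have h8 : (15 / 16 : ℝ) ≤ Real.exp (-(1 / 16)) := by
        have := Real.add_one_le_exp (-(1 / 16) : ℝ)
        linarith
      have h9 : Real.exp (-(1 / 16)) = Real.exp (-(1 / 32)) ^ 2 := by
        rw [← Real.exp_nat_mul]; norm_num
      refine (sq_le_sq₀ hr.le (Real.exp_pos _).le).1 ?_
      rw [hr2, ← h9]; exact h8
    calc r ^ k ≤ Real.exp (-(1 / 32)) ^ k := pow_le_pow_left₀ hr.le h7 k
      _ = _ := by rw [← Real.exp_nat_mul]; ring_nf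
  have hfin : (n : ℝ) * ((⌈(2 : ℝ) ^ ((1 / 256) * (s : ℝ) / (t : ℝ))⌉₊ : ℕ) * r ^ k) ≤
      Real.exp ((1 / 256) * k) * ((2 * Real.exp ((1 / 256) * k)) * Real.exp (-(1 / 32) * k)) := by
    gcongr
  have heq : Real.exp ((1 / 256) * (k : ℝ)) * ((2 * Real.exp ((1 / 256) * k)) *
      Real.exp (-(1 / 32) * k)) = 2 * Real.exp (-(6 / 256) * k) := by
    have : (-(6 / 256) * k : ℝ) = (1 / 256) * k + (1 / 256) * k + (-(1 / 32) * k) := by ring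
    rw [this, Real.exp_add, Real.exp_add]; ring
  have hlast : Real.exp (-(6 / 256) * (k : ℝ)) ≤ 1 / 64 := by
    have : (1 / 64 : ℝ) = Real.exp (-(6 * Real.log 2)) := by
      rw [Real.exp_neg, show (6 * Real.log 2 : ℝ) = ((6 : ℕ) : ℝ) * Real.log 2 by norm_num,
        Real.exp_nat_mul, Real.exp_log (by norm_num)]
      norm_num
    rw [this]
    apply Real.exp_le_exp.2
    linarith
  linarith

/-- Claim: structure inside 2-shattered pairs: given `t ≤ c₁·s/ln s` and pairs
`T_j` of bidders, there exist `z ≥ 2^(c₂·s/t)` allocations `B⁽ˡ⁾` consistent with the pairs,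
with each bidder receiving sets of a fixed size across the list, and a set `V` of bidders
such that a selection `f : V → [z]` yields pairwise disjoint received sets iff `f` is constant. -/
theorem structure_in_two_shattered :
    ∃ c₁ c₂ : ℝ, 0 < c₁ ∧ 0 < c₂ ∧
      ∀ s t : ℕ, 2 ≤ s → 2 ≤ t → (t : ℝ) ≤ c₁ * s / Real.log s →
        ∀ T : Fin s → Finset (Fin t), (∀ j, (T j).card = 2) →
          ∃ z : ℕ, (2 : ℝ) ^ (c₂ * (s : ℝ) / (t : ℝ)) ≤ (z : ℝ) ∧
            ∃ B : Fin z → Fin s → Fin t,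
              (∀ ℓ j, B ℓ j ∈ T j) ∧
              ∃ V : Finset (Fin t), 2 ≤ V.card ∧
                (∀ i : Fin t, ∀ ℓ ℓ' : Fin z,
                  (Finset.univ.filter fun x => B ℓ x = i).card =
                    (Finset.univ.filter fun x => B ℓ' x = i).card) ∧
                (∀ f : Fin t → Fin z,
                  ((∀ i ∈ V, ∀ i' ∈ V, f i = f i') ↔
                    (↑V : Set (Fin t)).Pairwise fun i i' =>
                      Disjoint (Finset.univ.filter fun x => B (f i) x = i)
                        (Finset.univ.filter fun x => B (f i') x = i'))) := by
  refine ⟨1 / 256, 1 / 256, by norm_num, by norm_num, ?_⟩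
  intro s t hs ht hst T hT
  have hex : ∀ j, ∃ a b : Fin t, a ≠ b ∧ T j = {a, b} := fun j => Finset.card_eq_two.1 (hT j)
  choose a b hne hab using hex
  have hk0 : (s / t) * (t - 1) < s := by
    rcases Nat.eq_zero_or_pos (s / t) with h | h
    · rw [h]; omega
    · have h1 : s / t * t ≤ s := Nat.div_mul_le_self s t
      have h2 : (s / t) * (t - 1) < (s / t) * t := Nat.mul_lt_mul_of_pos_left (by omega) h
      omega
  obtain ⟨V, hV2, hVcut⟩ := dense_sub T hT a b hab (s / t) (by omega) hk0
  have hVne : V.Nonempty := Finset.card_pos.1 (by omega)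
  have : Nonempty {v // v ∈ V} := hVne.to_subtype
  have hk : (s : ℝ) / t ≤ ((s / t + 1 : ℕ) : ℝ) := by
    rw [div_le_iff₀ (by positivity)]
    have : s ≤ (s / t + 1) * t := by
      have h1 := Nat.div_add_mod s t
      have h2 := Nat.mod_lt s (show t > 0 by omega)
      nlinarith
    exact_mod_cast this
  set z := ⌈(2 : ℝ) ^ ((1 / 256) * (s : ℝ) / (t : ℝ))⌉₊ with hz
  have hzpos : 0 < z := Nat.ceil_pos.2 (by positivity)
  have : Nonempty (Fin z) := ⟨⟨0, hzpos⟩⟩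
  have hsub : ∀ j, T j ⊆ V → a j ∈ V ∧ b j ∈ V := by
    intro j hj
    rw [hab] at hj
    exact ⟨hj (by simp), hj (by simp)⟩
  have hr2 : (Real.sqrt (15 / 16)) ^ 2 = 15 / 16 := Real.sq_sqrt (by norm_num)
  have hr : 0 < Real.sqrt (15 / 16) := Real.sqrt_pos.2 (by norm_num)
  obtain ⟨B, hB1, hB2, hB3⟩ := core (V := {v // v ∈ V}) (E := {j // T j ⊆ V}) (L := Fin z)
    (fun e => ⟨a e.1, (hsub e.1 e.2).1⟩) (fun e => ⟨b e.1, (hsub e.1 e.2).2⟩) (s / t + 1)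
    (by
      intro g ⟨v, w, hvw⟩
      let g' : Fin t → Bool := fun v => if h : v ∈ V then g ⟨v, h⟩ else false
      have hg' : ∀ v : {v // v ∈ V}, g' v.1 = g v := by
        intro v; simp [g', v.2]
      refine (hVcut g' ⟨v.1, v.2, w.1, w.2, by simpa [hg'] using hvw⟩).trans ?_
      unfold crossNum
      refine Finset.card_le_card_of_surjOn (fun e => e.1) ?_
      intro j hj
      simp only [Finset.coe_filter, Finset.mem_univ, true_and, Set.mem_ofPred_eq] at hj
      refine ⟨⟨j, hj.1⟩, ?_, rfl⟩
      simp only [Finset.coe_filter, Finset.mem_univ, true_and, Set.mem_ofPred_eq]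
      rw [← hg', ← hg']
      exact hj.2)
    (Real.sqrt (15 / 16)) hr hr2
    (by
      have := numeric s t (s / t + 1) V.card hs ht hst hk
        (by simpa using Finset.card_le_univ V) _ hr hr2
      rw [← hz] at this
      rw [Fintype.card_coe, Fintype.card_fin]
      exact this)
  refine ⟨z, Nat.le_ceil _, fun l j => if h : T j ⊆ V then (B l ⟨j, h⟩).1 else a j, ?_, V, hV2, ?_, ?_⟩
  · intro l j
    by_cases h : T j ⊆ V
    · simp only [h, dif_pos]
      rcases hB1 l ⟨j, h⟩ with h1 | h1 <;> rw [h1, hab] <;> simp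
    · show (if h : T j ⊆ V then (B l ⟨j, h⟩).1 else a j) ∈ T j
      rw [dif_neg h, hab]; simp
  · intro i
    have key : ∀ l, (Finset.univ.filter fun j =>
          (if h : T j ⊆ V then (B l ⟨j, h⟩).1 else a j) = i).card =
        (Finset.univ.filter fun e : {j // T j ⊆ V} => (B l e).1 = i).card +
        (Finset.univ.filter fun j => ¬ T j ⊆ V ∧ a j = i).card := by
      intro l
      rw [← Finset.card_filter_add_card_filter_not (fun j => T j ⊆ V)]
      congr 1
      · symm
        apply Finset.card_bij (fun e _ => e.1)
        · intro e he
          simp only [Finset.mem_filter, Finset.mem_univ, true_and] at he ⊢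
          exact ⟨by simpa [e.2] using he, e.2⟩
        · intro e _ e' _ h
          exact Subtype.ext h
        · intro j hj
          simp only [Finset.mem_filter, Finset.mem_univ, true_and] at hj
          obtain ⟨h1, h2⟩ := hj
          exact ⟨⟨j, h2⟩, by simpa [h2] using h1, rfl⟩
      · congr 1
        ext j
        simp only [Finset.mem_filter, Finset.mem_univ, true_and]
        by_cases h : T j ⊆ V <;> simp [h]
    intro l l'
    rw [key, key]
    congr 1
    by_cases hi : i ∈ V
    · have := hB2 ⟨i, hi⟩ l l'
      simpa [Subtype.ext_iff] using this
    · have : ∀ l, (Finset.univ.filter fun e : {j // T j ⊆ V} => (B l e).1 = i) = ∅ := by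
        intro l
        rw [Finset.filter_eq_empty_iff]
        intro e _ h
        exact hi (h ▸ (B l e).2)
      rw [this, this]
  · intro f
    constructor
    · intro h i hi i' hi' hii
      rw [h i hi i' hi', Finset.disjoint_left]
      intro x hx hx'
      simp only [Finset.mem_filter, Finset.mem_univ, true_and] at hx hx'
      exact hii (hx.symm.trans hx')
    · intro h
      by_contra hc
      push Not at hc
      obtain ⟨i, hi, i', hi', hii⟩ := hc
      obtain ⟨e, he, h1, h2⟩ := hB3 (fun v => f v.1) ⟨⟨i, hi⟩, ⟨i', hi'⟩, hii⟩
      have hd := h (hsub e.1 e.2).1 (hsub e.1 e.2).2 (fun h' => he (Subtype.ext h'))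
      have hd := Finset.disjoint_left.1 hd
      refine hd (a := e.1) ?_ ?_
      · simp only [Finset.mem_filter, Finset.mem_univ, true_and, e.2, dif_pos]
        exact congrArg Subtype.val h1
      · simp only [Finset.mem_filter, Finset.mem_univ, true_and, e.2, dif_pos]
        exact congrArg Subtype.val h2
end

section
/- There exist universal constants c₁, c₂ > 0 such that the following holds. Let s ≥ 2 and t ≥ 2 be integers with t ≤ c₁ · s/ln(s), for each j ∈ [s] let T_j ⊆ [t] have exactly two elements, let V ⊆ [t] with |V| ≥ 2 and E ⊆ [s] with T_j ⊆ V for all j ∈ E, and let 𝒜' be a nonempty finite set of functions B : E → [t] with B(j) ∈ T_j for all j ∈ E. Assume that for every partition of V into r ≥ 2 nonempty parts, letting C be the set of j ∈ E whose two endpoints lie in different parts: (i) |C| ≥ (r−1)·s/(50t), and (ii) for every g : C → [t] with g(j) ∈ T_j, the number of B ∈ 𝒜' with B|_C = g is at most 2^{−(24/25)|C|} · |𝒜'|. Then, with z := ⌊2^{c₂·s/t}⌋, there exist B⁽¹⁾,…,B⁽ᶻ⁾ ∈ 𝒜' such that for every function f : V → [z], f is constant if and only if the sets {x ∈ E : B^{(f(i))}(x)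 = i}, for i ∈ V, are pairwise disjoint. -/
theorem pc_three : (3:ℝ) * (2:ℝ) ^ (-(48/25 : ℝ)) ≤ Real.exp (-(Real.log 2 / 4)) := by
  have h3 : Real.log 3 ≤ 8/5 * Real.log 2 := by
    have h : Real.log ((3:ℝ)^5) ≤ Real.log ((2:ℝ)^8) := Real.log_le_log (by norm_num) (by norm_num)
    rw [Real.log_pow, Real.log_pow] at h
    push_cast at h
    linarith
  have hl : 0 < Real.log 2 := Real.log_pos (by norm_num)
  have e3 : (3:ℝ) = Real.exp (Real.log 3) := (Real.exp_log (by norm_num)).symm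
  rw [Real.rpow_def_of_pos (by norm_num)]
  conv_lhs => rw [e3]
  rw [← Real.exp_add]
  apply Real.exp_le_exp.mpr
  linarith

theorem pc_bad {ι β : Type} [Fintype ι] [DecidableEq ι] [DecidableEq β] (z : ℕ)
    (A : Finset (ι → β)) (a b : ι → β)
    (hA : ∀ B ∈ A, ∀ x, B x = a x ∨ B x = b x)
    (fa fb : ι → Fin z)
    (h : ∀ ℓ : Fin z, ∀ g : ι → β, (∀ x, g x = a x ∨ g x = b x) →
      ((A.filter fun B => ∀ x, ¬ (fa x = ℓ ↔ fb x = ℓ) → B x = g x).card : ℝ) ≤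
        (2:ℝ) ^ (-(24/25 : ℝ) * ((Finset.univ.filter fun x => ¬ (fa x = ℓ ↔ fb x = ℓ)).card : ℝ))
          * (A.card : ℝ)) :
    (((Fintype.piFinset fun _ : Fin z => A).filter fun Bs =>
      ∀ x, fa x ≠ fb x → ¬ (Bs (fa x) x = a x ∧ Bs (fb x) x = b x)).card : ℝ) ≤
    Real.exp (-(Real.log 2 / 4) * ((Finset.univ.filter fun x => fa x ≠ fb x).card : ℝ))
      * (A.card : ℝ) ^ z := by
  classical
  set c := (Finset.univ.filter fun x => fa x ≠ fb x).card with hc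
  let pat : ι → Finset (β × β) := fun x =>
    if fa x ≠ fb x then {(a x, a x), (b x, b x), (b x, a x)} else {(a x, a x)}
  let G : (ι → β × β) → Fin z → ι → β := fun u ℓ x => if fa x = ℓ then (u x).1 else (u x).2
  have hsub : ((Fintype.piFinset fun _ : Fin z => A).filter fun Bs =>
      ∀ x, fa x ≠ fb x → ¬ (Bs (fa x) x = a x ∧ Bs (fb x) x = b x)) ⊆
      (Fintype.piFinset pat).biUnion fun u => Fintype.piFinset fun ℓ : Fin z =>
        A.filter fun B => ∀ x, ¬ (fa x = ℓ ↔ fb x = ℓ) → B x = G u ℓ x := by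
    intro Bs hBs
    rw [Finset.mem_filter, Fintype.mem_piFinset] at hBs
    obtain ⟨hBA, hB⟩ := hBs
    rw [Finset.mem_biUnion]
    refine ⟨fun x => if fa x ≠ fb x then (Bs (fa x) x, Bs (fb x) x) else (a x, a x), ?_, ?_⟩
    · rw [Fintype.mem_piFinset]
      intro x
      by_cases hx : fa x = fb x
      · simp [pat, hx]
      · have h1 := hA _ (hBA (fa x)) x
        have h2 := hA _ (hBA (fb x)) x
        have h3 := hB x hx
        simp only [pat, ne_eq, hx, not_false_eq_true, if_true, Finset.mem_insert,
          Finset.mem_singleton, Prod.mk.injEq]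
        tauto
    · rw [Fintype.mem_piFinset]
      intro ℓ
      rw [Finset.mem_filter]
      refine ⟨hBA ℓ, fun x hx => ?_⟩
      have hne : fa x ≠ fb x := by
        intro he; apply hx; rw [he]
      simp only [G, hne, ne_eq, not_false_eq_true, if_true]
      by_cases h1 : fa x = ℓ
      · simp [h1]
      · have h2 : fb x = ℓ := by tauto
        simp [h1, h2]
  have hpat : (Fintype.piFinset pat).card ≤ 3 ^ c := by
    rw [Fintype.card_piFinset]
    calc ∏ x, (pat x).card ≤ ∏ x, (if fa x ≠ fb x then 3 else 1) := by
          apply Finset.prod_le_prod' 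
          intro x _
          by_cases hx : fa x = fb x
          · simp [pat, hx]
          · simp only [pat, ne_eq, hx, not_false_eq_true, if_true]
            exact Finset.card_le_three
      _ = 3 ^ c := by
          rw [Finset.prod_ite]; simp [hc]
  have hdc : ∑ ℓ : Fin z, (Finset.univ.filter fun x => ¬ (fa x = ℓ ↔ fb x = ℓ)).card = 2 * c := by
    simp_rw [Finset.card_filter]
    rw [Finset.sum_comm, hc, Finset.card_filter, Finset.mul_sum]
    apply Finset.sum_congr rfl
    intro x _
    rw [← Finset.card_filter]
    by_cases hx : fa x = fb x
    · simp [hx]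
    · simp only [ne_eq, hx, not_false_eq_true, if_true, mul_one]
      have : (Finset.univ.filter fun ℓ => ¬ (fa x = ℓ ↔ fb x = ℓ)) = {fa x, fb x} := by
        ext ℓ
        simp only [Finset.mem_filter, Finset.mem_univ, true_and, Finset.mem_insert,
          Finset.mem_singleton]
        grind
      rw [this, Finset.card_pair hx]
  have hfib : ∀ u ∈ Fintype.piFinset pat,
      ((Fintype.piFinset fun ℓ : Fin z =>
        A.filter fun B => ∀ x, ¬ (fa x = ℓ ↔ fb x = ℓ) → B x = G u ℓ x).card : ℝ) ≤
      ((2:ℝ) ^ (-(48/25 : ℝ))) ^ c * (A.card : ℝ) ^ z := by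
    intro u hu
    rw [Fintype.card_piFinset]
    push_cast
    calc _ ≤ ∏ ℓ : Fin z, ((2:ℝ) ^ (-(24/25 : ℝ) *
            ((Finset.univ.filter fun x => ¬ (fa x = ℓ ↔ fb x = ℓ)).card : ℝ)) * (A.card : ℝ)) := by
          apply Finset.prod_le_prod
          · intros; positivity
          · intro ℓ _
            apply h ℓ (G u ℓ)
            intro x
            rw [Fintype.mem_piFinset] at hu
            have := hu x
            by_cases hx : fa x = fb x
            · simp only [pat, hx, ne_eq, not_true_eq_false, if_false, Finset.mem_singleton] at this
              simp [G, this]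
            · simp only [pat, ne_eq, hx, not_false_eq_true, if_true, Finset.mem_insert,
                Finset.mem_singleton] at this
              simp only [G]
              rcases this with h | h | h <;> rw [h] <;> split_ifs <;> simp
      _ = _ := by
          rw [Finset.prod_mul_distrib, Finset.prod_const, Finset.card_univ, Fintype.card_fin]
          congr 1
          rw [← Real.rpow_sum_of_pos (by norm_num), ← Finset.mul_sum, ← Nat.cast_sum, hdc,
            ← Real.rpow_natCast, ← Real.rpow_mul (by norm_num)]
          congr 1
          push_cast; ring
  calc _ ≤ (((Fintype.piFinset pat).biUnion fun u => Fintype.piFinset fun ℓ : Fin z =>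
        A.filter fun B => ∀ x, ¬ (fa x = ℓ ↔ fb x = ℓ) → B x = G u ℓ x).card : ℝ) := by
        exact_mod_cast Finset.card_le_card hsub
    _ ≤ ∑ u ∈ Fintype.piFinset pat, ((Fintype.piFinset fun ℓ : Fin z =>
        A.filter fun B => ∀ x, ¬ (fa x = ℓ ↔ fb x = ℓ) → B x = G u ℓ x).card : ℝ) := by
        exact_mod_cast Finset.card_biUnion_le
    _ ≤ ∑ u ∈ Fintype.piFinset pat, ((2:ℝ) ^ (-(48/25 : ℝ))) ^ c * (A.card : ℝ) ^ z :=
        Finset.sum_le_sum hfib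
    _ = ((Fintype.piFinset pat).card : ℝ) * (((2:ℝ) ^ (-(48/25 : ℝ))) ^ c * (A.card : ℝ) ^ z) := by
        rw [Finset.sum_const, nsmul_eq_mul]
    _ ≤ (3:ℝ) ^ c * (((2:ℝ) ^ (-(48/25 : ℝ))) ^ c * (A.card : ℝ) ^ z) := by
        gcongr
        exact_mod_cast hpat
    _ = ((3:ℝ) * (2:ℝ) ^ (-(48/25 : ℝ))) ^ c * (A.card : ℝ) ^ z := by rw [mul_pow]; ring
    _ ≤ (Real.exp (-(Real.log 2 / 4))) ^ c * (A.card : ℝ) ^ z := by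
        gcongr
        exact pc_three
    _ = _ := by
        rw [← Real.exp_nat_mul]; ring_nf

theorem pc_numeric (s t : ℕ) (hs : 2 ≤ s) (ht : 2 ≤ t)
    (hst : (t : ℝ) ≤ (1/3200) * s / Real.log s) (z n : ℕ) (hz1 : 1 ≤ z) (hn : n ≤ t)
    (hz : (z:ℝ) ≤ (2:ℝ) ^ ((1/800) * (s:ℝ) / (t:ℝ))) :
    (z:ℝ) * (1 + (z - 1) * Real.exp (-((s:ℝ) / (50 * t)) * (Real.log 2 / 4))) ^ n - z < 1 := by
  have hs' : (2:ℝ) ≤ s := by exact_mod_cast hs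
  have ht' : (2:ℝ) ≤ t := by exact_mod_cast ht
  have hn' : (n:ℝ) ≤ t := by exact_mod_cast hn
  have hz1' : (1:ℝ) ≤ z := by exact_mod_cast hz1
  have hl2 : (1/2:ℝ) < Real.log 2 := by have := Real.log_two_gt_d9; linarith
  have hls : Real.log 2 ≤ Real.log s := Real.log_le_log (by norm_num) hs'
  have hlpos : 0 < Real.log s := by linarith
  set q := Real.exp (-((s:ℝ) / (50 * t)) * (Real.log 2 / 4)) with hq
  have hqpos : 0 < q := Real.exp_pos _
  have h1 : (t:ℝ) * Real.log s ≤ (1/3200) * s := by rwa [le_div_iff₀ hlpos] at hst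
  have h2 : 3200 * Real.log s ≤ (s:ℝ) / t := by
    rw [le_div_iff₀ (by linarith)]; linarith
  have h2t : 2 * (t:ℝ) ≤ s := by nlinarith
  set w := (s:ℝ)/t with hw
  have hz2 : (z:ℝ) ≤ Real.exp (Real.log 2 * (w / 800)) := by
    rw [Real.rpow_def_of_pos (by norm_num)] at hz
    convert hz using 3
    rw [hw]; ring
  have hq2 : q = Real.exp (-(Real.log 2 * (w / 200))) := by
    rw [hq]; congr 1; rw [hw]; field_simp; ring
  have key : z ^ 2 * q * (2 * t) < 1 := by
    calc (z:ℝ) ^ 2 * q * (2 * t) ≤ (Real.exp (Real.log 2 * (w / 800)))^2 * q * s := by gcongr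
      _ = Real.exp (-(Real.log 2 * (w / 400)) + Real.log s) := by
          rw [hq2, Real.exp_add, Real.exp_log (by linarith), ← Real.exp_nat_mul, ← Real.exp_add]
          congr 2; push_cast; ring
      _ < 1 := by
          rw [Real.exp_lt_one_iff]
          nlinarith
  set y := (z - 1) * q * n with hy
  have hy0 : 0 ≤ y := by
    apply mul_nonneg (mul_nonneg (by linarith) hqpos.le) (by positivity)
  have hyz : y ≤ z * q * t := by
    rw [hy]; gcongr; linarith
  have hzy : z * y * 2 < 1 := by
    calc z * y * 2 ≤ z * (z * q * t) * 2 := by gcongr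
      _ < 1 := by linarith
  have hy1 : y ≤ 1 := by nlinarith
  have hexp : (1 + (z - 1) * q) ^ n ≤ Real.exp y := by
    calc (1 + (z - 1) * q) ^ n ≤ (Real.exp ((z-1)*q)) ^ n := by
          have : 0 ≤ ((z:ℝ)-1)*q := mul_nonneg (by linarith) hqpos.le
          gcongr
          linarith [Real.add_one_le_exp (((z:ℝ)-1)*q)]
      _ = Real.exp y := by rw [← Real.exp_nat_mul, hy]; ring_nf
  have h3 := Real.abs_exp_sub_one_le (x := y) (by rw [abs_of_nonneg hy0]; exact hy1)
  rw [abs_of_nonneg hy0] at h3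
  have h4 := le_of_abs_le h3
  have : (1 + (z - 1) * q) ^ n - 1 ≤ 2 * y := by linarith
  nlinarith

/-- number of bichromatic edges -/
def pcCut {ι α γ : Type} [Fintype ι] [DecidableEq γ] (a b : ι → α) (f : α → γ) : ℕ :=
  (Finset.univ.filter fun x => f (a x) ≠ f (b x)).card

/-- differential comparison -/
theorem pc_ode (D D' : ℝ → ℝ) (m : ℝ) (hD : ∀ τ, HasDerivAt D (D' τ) τ) (h0 : D 0 ≤ 0)
    (h : ∀ τ, 0 ≤ τ → D' τ ≤ - m * D τ) (τ : ℝ) (hτ : 0 ≤ τ) : D τ ≤ 0 := by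
  have hF : ∀ τ, HasDerivAt (fun τ => D τ * Real.exp (m * τ))
      (D' τ * Real.exp (m * τ) + D τ * (Real.exp (m * τ) * m)) τ := by
    intro τ
    have h2 : HasDerivAt (fun τ => Real.exp (m * τ)) (Real.exp (m * τ) * m) τ := by
      have := ((hasDerivAt_id τ).const_mul m).exp
      simpa using this
    exact (hD τ).mul h2
  have hanti : AntitoneOn (fun τ => D τ * Real.exp (m * τ)) (Set.Ici 0) := by
    apply antitoneOn_of_hasDerivWithinAt_nonpos (convex_Ici 0)
      (fun x _ => (hF x).continuousAt.continuousWithinAt)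
      (fun x _ => (hF x).hasDerivWithinAt)
    intro x hx
    rw [interior_Ici] at hx
    have := h x (le_of_lt hx)
    have he := Real.exp_pos (m * x)
    nlinarith
  have h1 := hanti (Set.mem_Ici.mpr le_rfl) (Set.mem_Ici.mpr hτ) hτ
  simp only [mul_zero, Real.exp_zero, mul_one] at h1
  have he := Real.exp_pos (m * τ)
  by_contra hcon
  push Not at hcon
  have := mul_pos hcon he
  linarith

theorem pc_cluster {ι : Type} [Fintype ι] [DecidableEq ι] (z : ℕ) (hz : 1 ≤ z) (k : ℝ) (n : ℕ) :
    ∀ (α : Type) [Fintype α] [DecidableEq α], Fintype.card α = n + 1 → ∀ a b : ι → α,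
    (∀ (r : ℕ) (P : α → Fin r), 1 ≤ r → Function.Surjective P →
      ((r:ℝ) - 1) * k ≤ pcCut a b P) →
    ∀ τ : ℝ, 0 ≤ τ →
    ∑ f : α → Fin z, Real.exp (-τ * pcCut a b f) ≤ z * (1 + (z - 1) * Real.exp (-k * τ)) ^ n := by
  have hz' : (1:ℝ) ≤ z := by exact_mod_cast hz
  induction n with
  | zero =>
    intro α _ _ hcard a b _ τ _
    have hs : ∀ x y : α, x = y := by
      have : Fintype.card α ≤ 1 := by omega
      exact fun x y => Fintype.card_le_one_iff.mp this x y
    have : ∀ f : α → Fin z, pcCut a b f = 0 := by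
      intro f
      unfold pcCut
      rw [Finset.card_eq_zero, Finset.filter_eq_empty_iff]
      intro x _ hx
      exact hx (by rw [hs (a x) (b x)])
    simp [this, hcard]
  | succ n ih =>
    intro α _ _ hcard a b hyp τ hτ
    set m := pcCut a b (id : α → α) with hm
    have hmk : ((n:ℝ) + 1) * k ≤ m := by
      have h1 := hyp (n + 2) (Fintype.equivFinOfCardEq hcard) (by omega) (Equiv.surjective _)
      have h2 : pcCut a b (Fintype.equivFinOfCardEq hcard) = m := by
        simp [hm, pcCut]
      rw [h2] at h1
      push_cast at h1
      linarith
    let Φ : ℕ → ℝ → ℝ := fun r τ => z * (1 + (z - 1) * Real.exp (-k * τ)) ^ r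
    let Z : ℝ → ℝ := fun τ => ∑ f : α → Fin z, Real.exp (-τ * pcCut a b f)
    have hZ' : ∀ τ, HasDerivAt Z (∑ f : α → Fin z, Real.exp (-τ * pcCut a b f) * (- pcCut a b f)) τ := by
      intro τ
      apply HasDerivAt.fun_sum
      intro f _
      have := ((hasDerivAt_id τ).neg.mul_const (pcCut a b f : ℝ)).exp
      simpa using this
    have hΦ' : ∀ τ, HasDerivAt (Φ (n+1))
        (-k * (n+1) * (Φ (n+1) τ - Φ n τ)) τ := by
      intro τ
      have h1 : HasDerivAt (fun τ => Real.exp (-k * τ)) (Real.exp (-k * τ) * (-k)) τ := by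
        have := ((hasDerivAt_id τ).const_mul (-k)).exp
        simpa using this
      have h2 := (((h1.const_mul ((z:ℝ)-1)).const_add 1).pow (n+1)).const_mul (z:ℝ)
      refine HasDerivAt.congr_deriv (f := Φ (n+1)) h2 ?_
      simp only [Φ, Nat.add_sub_cancel]
      push_cast
      ring
    -- contraction
    have hcontr : ∀ τ, 0 ≤ τ → ∀ x, a x ≠ b x →
        ∑ f : α → Fin z with f (a x) = f (b x), Real.exp (-τ * pcCut a b f) ≤ Φ n τ := by
      intro τ hτ e he
      let π : α → {y : α // y ≠ b e} := fun y => if hy : y = b e then ⟨a e, he⟩ else ⟨y, hy⟩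
      have hπ : ∀ y : {y : α // y ≠ b e}, π y.1 = y := by
        intro y; simp [π, y.2]
      have hcard' : Fintype.card {y : α // y ≠ b e} = n + 1 := by
        rw [Fintype.card_subtype_compl, Fintype.card_subtype_eq]; omega
      have h1 := ih {y : α // y ≠ b e} hcard' (π ∘ a) (π ∘ b) (by
        intro r P hr hP
        exact hyp r (P ∘ π) hr (hP.comp (fun y => ⟨y.1, hπ y⟩))) τ hτ
      refine le_trans (le_of_eq ?_) h1
      symm
      apply Finset.sum_bij (fun (g : {y : α // y ≠ b e} → Fin z) _ => g ∘ π)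
      · intro g _
        simp [π, he]
      · intro g _ g' _ hgg
        funext y
        have := congrFun hgg y.1
        simpa [hπ] using this
      · intro f hf
        refine ⟨fun y => f y.1, Finset.mem_univ _, ?_⟩
        simp only [Finset.mem_filter, Finset.mem_univ, true_and] at hf
        funext y
        by_cases hy : y = b e
        · simp [π, hy, hf]
        · simp [π, hy]
      · intro g _
        rfl
    have hsum : ∀ τ, 0 ≤ τ → (m:ℝ) * Z τ +
        ∑ f : α → Fin z, Real.exp (-τ * pcCut a b f) * (- pcCut a b f) ≤ m * Φ n τ := by
      intro τ hτ
      have h1 : (∑ x with a x ≠ b x,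
          ∑ f : α → Fin z with f (a x) = f (b x), Real.exp (-τ * pcCut a b f)) ≤ m * Φ n τ := by
        calc _ ≤ ∑ x with a x ≠ b x, Φ n τ := by
              apply Finset.sum_le_sum
              intro x hx
              exact hcontr τ hτ x (by simpa using hx)
          _ = m * Φ n τ := by
              rw [Finset.sum_const, nsmul_eq_mul]; simp [hm, pcCut]
      refine le_trans (le_of_eq ?_) h1
      simp_rw [Finset.sum_filter (fun f : α → Fin z => f (a _) = f (b _))]
      rw [Finset.sum_comm, Finset.mul_sum, ← Finset.sum_add_distrib]
      apply Finset.sum_congr rfl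
      intro f _
      rw [← Finset.sum_filter, Finset.sum_const, nsmul_eq_mul, Finset.filter_filter]
      have hc : (Finset.univ.filter fun x => a x ≠ b x ∧ f (a x) = f (b x)).card + pcCut a b f = m := by
        rw [hm]
        unfold pcCut
        rw [← Finset.card_union_of_disjoint]
        · congr 1
          ext x
          simp only [Finset.mem_union, Finset.mem_filter, Finset.mem_univ, true_and, id]
          grind
        · rw [Finset.disjoint_left]
          intro x hx
          simp at hx ⊢
          exact hx.2
      rw [← hc]
      push_cast
      ring
    have hfin := pc_ode (fun τ => Z τ - Φ (n+1) τ) _ m (fun τ => (hZ' τ).sub (hΦ' τ)) (by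
        simp [Z, Φ, hcard]; ring_nf; rfl) (by
        intro τ hτ
        have h1 := hsum τ hτ
        have h2 : 0 ≤ Φ (n+1) τ - Φ n τ := by
          have he : 0 ≤ ((z:ℝ) - 1) * Real.exp (-k * τ) :=
            mul_nonneg (by linarith) (Real.exp_pos _).le
          have : (1 + ((z:ℝ) - 1) * Real.exp (-k * τ)) ^ n ≤ (1 + (z - 1) * Real.exp (-k * τ)) ^ (n+1) :=
            pow_le_pow_right₀ (by linarith) (by omega)
          simp only [Φ]
          rw [sub_nonneg]
          gcongr
        have h3 := mul_le_mul_of_nonneg_right hmk h2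
        nlinarith) τ hτ
    simp only [Z, Φ] at hfin
    linarith

/-- probabilistic construction: if every partition of `V` into `r ≥ 2` nonempty
parts induces a large cut `C` (|C| ≥ (r−1)s/(50t)) and fixing the allocation of the items of `C`
keeps at most a `2^(-(24/25)|C|)` fraction of `𝒜'`, then with `z = ⌊2^(c₂·s/t)⌋` there exist
`B⁽¹⁾, …, B⁽ᶻ⁾ ∈ 𝒜'` such that a selection `f : V → [z]` yields pairwise disjoint
received-sets iff `f` is constant on `V`. -/
theorem probabilistic_construction :
    ∃ c₁ c₂ : ℝ, 0 < c₁ ∧ 0 < c₂ ∧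
      ∀ s t : ℕ, 2 ≤ s → 2 ≤ t → (t : ℝ) ≤ c₁ * s / Real.log s →
        ∀ T : Fin s → Finset (Fin t), (∀ j, (T j).card = 2) →
          ∀ (V : Finset (Fin t)) (E : Finset (Fin s)),
            2 ≤ V.card → (∀ j ∈ E, T j ⊆ V) →
            ∀ 𝒜' : Set ({x : Fin s // x ∈ E} → Fin t), 𝒜'.Nonempty →
              (∀ B ∈ 𝒜', ∀ x : {x : Fin s // x ∈ E}, B x ∈ T x.1) →
              (∀ (r : ℕ), 2 ≤ r → ∀ P : Fin t → Fin r,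
                (∀ p : Fin r, ∃ i ∈ V, P i = p) →
                let C : Finset (Fin s) := E.filter fun j => ∃ a ∈ T j, ∃ b ∈ T j, P a ≠ P b
                (((r : ℝ) - 1) * s / (50 * t) ≤ (C.card : ℝ)) ∧
                ∀ g : Fin s → Fin t, (∀ j ∈ C, g j ∈ T j) →
                  (({B ∈ 𝒜' | ∀ x : {x : Fin s // x ∈ E}, x.1 ∈ C → B x = g x.1}.ncard : ℝ)
                    ≤ (2 : ℝ) ^ (-(24 / 25 : ℝ) * (C.card : ℝ)) * (𝒜'.ncard : ℝ))) →
              ∀ z : ℕ, z = ⌊(2 : ℝ) ^ (c₂ * (s : ℝ) / (t : ℝ))⌋₊ →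
                ∃ B : Fin z → ({x : Fin s // x ∈ E} → Fin t),
                  (∀ ℓ : Fin z, B ℓ ∈ 𝒜') ∧
                  ∀ f : Fin t → Fin z,
                    ((∀ i ∈ V, ∀ i' ∈ V, f i = f i') ↔
                      (↑V : Set (Fin t)).Pairwise fun i i' =>
                        Disjoint {x : {x : Fin s // x ∈ E} | B (f i) x = i}
                          {x : {x : Fin s // x ∈ E} | B (f i') x = i'}) := by
  classical
  refine ⟨1/3200, 1/800, by norm_num, by norm_num, ?_⟩
  intro s t hs ht hst T hT V E hV hE 𝒜' hne hA hyp z hz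
  have hz1 : 1 ≤ z := by
    rw [hz]
    apply Nat.le_floor
    rw [Nat.cast_one]
    exact Real.one_le_rpow (by norm_num) (by positivity)
  have hzle : (z:ℝ) ≤ (2:ℝ) ^ ((1/800) * (s:ℝ) / (t:ℝ)) := by
    rw [hz]; exact Nat.floor_le (by positivity)
  have hT2 : ∀ j, ∃ p : Fin t × Fin t, p.1 ≠ p.2 ∧ T j = {p.1, p.2} := by
    intro j
    obtain ⟨x, y, hxy, h⟩ := Finset.card_eq_two.mp (hT j)
    exact ⟨(x, y), hxy, h⟩
  choose p hpne hpT using hT2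
  have haT : ∀ j, (p j).1 ∈ T j := fun j => by rw [hpT j]; simp
  have hbT : ∀ j, (p j).2 ∈ T j := fun j => by rw [hpT j]; simp
  let a : {x : Fin s // x ∈ E} → {i : Fin t // i ∈ V} := fun x => ⟨(p x.1).1, hE x.1 x.2 (haT x.1)⟩
  let b : {x : Fin s // x ∈ E} → {i : Fin t // i ∈ V} := fun x => ⟨(p x.1).2, hE x.1 x.2 (hbT x.1)⟩
  have hmemT : ∀ j y, y ∈ T j ↔ y = (p j).1 ∨ y = (p j).2 := fun j y => by rw [hpT j]; simp
  have hcutiff : ∀ (r : ℕ) (P : Fin t → Fin r) (j : Fin s),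
      (∃ x ∈ T j, ∃ y ∈ T j, P x ≠ P y) ↔ P (p j).1 ≠ P (p j).2 := by
    intro r P j
    constructor
    · rintro ⟨x, hx, y, hy, hxy⟩ h
      rw [hmemT] at hx hy
      rcases hx with rfl | rfl <;> rcases hy with rfl | rfl <;> simp_all
    · intro h
      exact ⟨_, haT j, _, hbT j, h⟩
  have hcardE : ∀ (r : ℕ) (P : Fin t → Fin r),
      (E.filter fun j => ∃ x ∈ T j, ∃ y ∈ T j, P x ≠ P y).card
      = (Finset.univ.filter fun x : {x : Fin s // x ∈ E} => P (a x) ≠ P (b x)).card := by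
    intro r P
    symm
    apply Finset.card_bij (fun x _ => x.1)
    · intro x hx
      simp only [Finset.mem_filter, Finset.mem_univ, true_and] at hx
      rw [Finset.mem_filter, hcutiff]
      exact ⟨x.2, hx⟩
    · intro x _ y _ h
      exact Subtype.ext h
    · intro j hj
      rw [Finset.mem_filter, hcutiff] at hj
      exact ⟨⟨j, hj.1⟩, by simpa [a, b] using hj.2, rfl⟩
  have hVpos : 0 < V.card := by omega
  obtain ⟨n, hn⟩ : ∃ n, V.card = n + 1 := ⟨V.card - 1, by omega⟩
  have hVt : V.card ≤ t := by simpa using Finset.card_le_univ V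
  obtain ⟨i0, hi0⟩ := Finset.card_pos.mp hVpos
  -- sum over all colourings
  have hclus := pc_cluster (ι := {x : Fin s // x ∈ E}) z hz1 ((s:ℝ) / (50 * t)) n
    {i : Fin t // i ∈ V} (by rw [Fintype.card_coe, hn]) a b (by
      intro r P hr hP
      by_cases hr1 : r = 1
      · subst hr1; simp
      have hr2 : 2 ≤ r := by omega
      let P' : Fin t → Fin r := fun i => if h : i ∈ V then P ⟨i, h⟩ else ⟨0, by omega⟩
      have hP' : ∀ i : {i : Fin t // i ∈ V}, P' i.1 = P i := by
        intro i; simp [P']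
      have h1 := (hyp r hr2 P' (by
        intro q
        obtain ⟨i, hi⟩ := hP q
        exact ⟨i.1, i.2, by rw [hP', hi]⟩)).1
      rw [hcardE] at h1
      simp only [hP'] at h1
      unfold pcCut
      rw [← mul_div_assoc]
      exact h1) (Real.log 2 / 4) (div_nonneg (Real.log_nonneg (by norm_num)) (by norm_num))
  have hnum := pc_numeric s t hs ht hst z n hz1 (by omega) hzle
  let const : Finset ({i : Fin t // i ∈ V} → Fin z) :=
    Finset.univ.image fun ℓ : Fin z => fun _ => ℓ
  have hconst : ∑ f ∈ const, Real.exp (-(Real.log 2 / 4) * pcCut a b f) = z := by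
    rw [Finset.sum_image]
    · simp [pcCut]
    · intro x _ y _ h
      exact congrFun h ⟨i0, hi0⟩
  have hnonconst : ∑ f ∈ constᶜ, Real.exp (-(Real.log 2 / 4) * pcCut a b f) < 1 := by
    have := Finset.sum_add_sum_compl const
      (fun f => Real.exp (-(Real.log 2 / 4) * (pcCut a b f : ℝ)))
    linarith
  -- random choice
  let A : Finset ({x : Fin s // x ∈ E} → Fin t) := 𝒜'.toFinset
  have hAmem : ∀ B, B ∈ A ↔ B ∈ 𝒜' := fun B => Set.mem_toFinset
  have hAcard : 𝒜'.ncard = A.card := Set.ncard_eq_toFinset_card' _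
  have hApos : 0 < A.card := by
    rw [Finset.card_pos]
    obtain ⟨B, hB⟩ := hne
    exact ⟨B, (hAmem B).mpr hB⟩
  let bad : ({i : Fin t // i ∈ V} → Fin z) → Finset (Fin z → ({x : Fin s // x ∈ E} → Fin t)) :=
    fun f => (Fintype.piFinset fun _ : Fin z => A).filter fun Bs =>
      ∀ x, f (a x) ≠ f (b x) → ¬ (Bs (f (a x)) x = (a x).1 ∧ Bs (f (b x)) x = (b x).1)
  have hbad : ∀ f ∈ constᶜ, ((bad f).card : ℝ) ≤
      Real.exp (-(Real.log 2 / 4) * pcCut a b f) * (A.card : ℝ) ^ z := by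
    intro f hf
    apply pc_bad z A (fun x => (a x).1) (fun x => (b x).1) _ (fun x => f (a x)) (fun x => f (b x))
    · intro ℓ g hg
      by_cases hex : ∃ i, f i = ℓ
      · have hex2 : ∃ i, f i ≠ ℓ := by
          by_contra hcon
          push Not at hcon
          rw [Finset.mem_compl] at hf
          apply hf
          rw [Finset.mem_image]
          exact ⟨ℓ, Finset.mem_univ _, funext fun i => (hcon i).symm⟩
        let P : Fin t → Fin 2 := fun i => if ∃ h : i ∈ V, f ⟨i, h⟩ = ℓ then 0 else 1
        have hP : ∀ i : {i : Fin t // i ∈ V}, P i.1 = if f i = ℓ then 0 else 1 := by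
          intro i
          simp [P]
        have hPne : ∀ i i' : {i : Fin t // i ∈ V}, P i.1 ≠ P i'.1 ↔ ¬ (f i = ℓ ↔ f i' = ℓ) := by
          intro i i'
          rw [hP, hP]
          by_cases h1 : f i = ℓ <;> by_cases h2 : f i' = ℓ <;> simp [h1, h2]
        have h1 := (hyp 2 le_rfl P (by
          intro q
          obtain ⟨i, hi⟩ := hex
          obtain ⟨i', hi'⟩ := hex2
          fin_cases q
          · exact ⟨i.1, i.2, by rw [hP]; simp [hi]⟩
          · exact ⟨i'.1, i'.2, by rw [hP]; simp [hi']⟩)).2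
          (fun j => if h : j ∈ E then g ⟨j, h⟩ else (p j).1) (by
            intro j hj
            have hjE := (Finset.mem_filter.mp hj).1
            simp only [hjE, dif_pos]
            rw [hmemT]
            exact hg ⟨j, hjE⟩)
        rw [hcardE, hAcard] at h1
        simp only [hPne] at h1
        refine le_trans (le_of_eq ?_) h1
        rw [Set.ncard_eq_toFinset_card']
        congr 2
        ext B
        simp only [Finset.mem_filter, Set.mem_toFinset, Set.mem_setOf_eq, hAmem, hcutiff]
        refine and_congr_right fun _ => forall_congr' fun x => ?_
        have h2 : P (p x.1).1 ≠ P (p x.1).2 ↔ _ := hPne (a x) (b x)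
        rw [h2]
        simp [x.2]
      · push Not at hex
        simp only [hex, iff_self, not_true_eq_false, Finset.filter_false, Finset.card_empty,
          Nat.cast_zero, mul_zero, Real.rpow_zero, one_mul]
        exact_mod_cast Finset.card_filter_le _ _
    · intro B hB x
      have := hA B ((hAmem B).mp hB) x
      rwa [hmemT] at this
  have hlt : (constᶜ.biUnion bad).card < (Fintype.piFinset fun _ : Fin z => A).card := by
    have hN : (0:ℝ) < (A.card : ℝ) ^ z := by positivity
    have h1 : ((constᶜ.biUnion bad).card : ℝ) ≤ ∑ f ∈ constᶜ, ((bad f).card : ℝ) := by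
      exact_mod_cast Finset.card_biUnion_le
    have h2 := Finset.sum_le_sum hbad
    rw [← Finset.sum_mul] at h2
    have h3 : ((constᶜ.biUnion bad).card : ℝ) < ((A.card ^ z : ℕ) : ℝ) := by
      push_cast
      nlinarith
    rw [Fintype.card_piFinset_const]
    exact_mod_cast h3
  obtain ⟨Bs, hBs, hgood⟩ := Finset.exists_mem_notMem_of_card_lt_card hlt
  have hBsA := Fintype.mem_piFinset.mp hBs
  refine ⟨Bs, fun ℓ => (hAmem _).mp (hBsA ℓ), ?_⟩
  intro f
  constructor
  · intro hf i hi i' hi' hii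
    rw [Set.disjoint_left]
    intro x hx hx'
    simp only [Set.mem_setOf_eq] at hx hx'
    rw [hf i hi i' hi'] at hx
    exact hii (hx.symm.trans hx')
  · intro hdis
    by_contra hcon
    apply hgood
    rw [Finset.mem_biUnion]
    refine ⟨fun i => f i.1, ?_, ?_⟩
    · rw [Finset.mem_compl, Finset.mem_image]
      rintro ⟨ℓ, _, hℓ⟩
      apply hcon
      intro i hi i' hi'
      exact (congrFun hℓ ⟨i, hi⟩).symm.trans (congrFun hℓ ⟨i', hi'⟩)
    · rw [Finset.mem_filter]
      refine ⟨hBs, ?_⟩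
      rintro x - ⟨h1, h2⟩
      have := hdis (a x).2 (b x).2 (hpne x.1)
      exact (Set.disjoint_left.mp this) (show x ∈ _ from h1) h2
end
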